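/- arXiv:1809.08544 — 8 statements merged into one kernel-verified Lean document; each statement's English description precedes it below -/
import Mathlib

section
/- Let φ₊ : [0,1] → ℝ be continuous with φ₊(0) = 1 and φ₊(y) ≥ 1/2 for all y ∈ [0,1]. Then lim_{y→0+} b(y)·φ₊(y)·((u'(0)² − b'(0)²)/b'(0))·∫₁^y dz/((u(z)² − b(z)²)·φ₊(z)²) = −1. (In particular the limiting profile b(y)Γ⁺(α,y) of the magnetic island extends continuously to y = 0 with value −1.) -/
open Filter Set Topology

/-!
Since `u = u'(0) z + o(z)` and `b = b'(0) z + o(z)`, the integrand behaves like `L / z²`, where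
`L = 1 / ((u'(0)² - b'(0)²) φ₊(0)²)`. Its integral over `[y, a]` therefore diverges like `L / y`,
which the factor `b(y) ~ b'(0) y` exactly compensates. To control the remainder `f`, the integrand
minus `L / z²`, compare integrals: if `f = o(g)` and `∫ g` diverges, then `∫ f = o(∫ g)`; here
`g = 1 / z²`.
-/

open Asymptotics MeasureTheory

section PowerSingularity

variable {a y r : ℝ}

lemma intervalIntegrable_rpow_of_pos (hy : 0 < y) (ha : 0 < a) :
    IntervalIntegrable (fun z => z ^ r) volume y a :=
  intervalIntegral.intervalIntegrable_rpow (.inr (notMem_uIcc_of_lt hy ha))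

lemma integral_rpow_neg_add_one (hr : r ≠ 0) (hy : 0 < y) (ha : 0 < a) :
    ∫ z in y..a, z ^ (-(r + 1)) = (y ^ (-r) - a ^ (-r)) / r := by
  rw [integral_rpow (.inr ⟨by simpa using hr, notMem_uIcc_of_lt hy ha⟩),
    show -(r + 1) + 1 = -r by ring, div_neg, ← neg_div, neg_sub]

lemma tendsto_integral_rpow_neg_add_one_atTop (hr : 0 < r) (ha : 0 < a) :
    Tendsto (fun y => ∫ z in y..a, z ^ (-(r + 1))) (𝓝[>] 0) atTop := by
  have hpow : Tendsto (fun y : ℝ => y ^ (-r)) (𝓝[>] 0) atTop :=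
    tendsto_rpow_neg_nhdsGT_zero (neg_lt_zero.2 hr)
  refine ((tendsto_atTop_add_const_right _ (-a ^ (-r)) hpow).atTop_div_const hr).congr' ?_
  filter_upwards [self_mem_nhdsWithin] with y hy
  rw [integral_rpow_neg_add_one hr.ne' hy ha, sub_eq_add_neg]

lemma tendsto_rpow_mul_integral_rpow_neg_add_one (hr : 0 < r) (ha : 0 < a) :
    Tendsto (fun y => y ^ r * ∫ z in y..a, z ^ (-(r + 1))) (𝓝[>] 0) (𝓝 r⁻¹) := by
  have hpow : Tendsto (fun y : ℝ => y ^ r) (𝓝[>] 0) (𝓝 0) := by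
    simpa [hr.ne'] using
      ((Real.continuous_rpow_const hr.le).tendsto 0).mono_left nhdsWithin_le_nhds
  have hlim : Tendsto (fun y : ℝ => (1 - y ^ r * a ^ (-r)) / r) (𝓝[>] 0) (𝓝 r⁻¹) := by
    simpa using ((hpow.mul_const (a ^ (-r))).const_sub 1).div_const r
  refine hlim.congr' ?_
  filter_upwards [self_mem_nhdsWithin] with y (hy : 0 < y)
  rw [integral_rpow_neg_add_one hr.ne' hy ha, mul_div_assoc', mul_sub, ← Real.rpow_add hy,
    add_neg_cancel, Real.rpow_zero]

end PowerSingularity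

section DivergentIntegrals

variable {E : Type*} [NormedAddCommGroup E] [NormedSpace ℝ E] {f : ℝ → E} {a : ℝ}

lemma isLittleO_intervalIntegral_nhdsGT {μ : Measure ℝ} {g : ℝ → ℝ} {x₀ : ℝ} (ha : x₀ < a)
    (hf : ∀ y ∈ Ioo x₀ a, IntervalIntegrable f μ y a)
    (hg : ∀ y ∈ Ioo x₀ a, IntervalIntegrable g μ y a)
    (hg_nonneg : ∀ᶠ z in 𝓝[>] x₀, 0 ≤ g z) (hfg : f =o[𝓝[>] x₀] g)
    (hg_atTop : Tendsto (fun y => ∫ z in y..a, g z ∂μ) (𝓝[>] x₀) atTop) :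
    (fun y => ∫ z in y..a, f z ∂μ) =o[𝓝[>] x₀] fun y => ∫ z in y..a, g z ∂μ := by
  refine isLittleO_iff.2 fun ε hε => ?_
  obtain ⟨δ, hx₀δ, hδ⟩ := mem_nhdsGT_iff_exists_Ioc_subset.1 <|
    (isLittleO_iff.1 hfg (half_pos hε)).and (hg_nonneg.and (Ioo_mem_nhdsGT ha))
  have hδ_mem : δ ∈ Ioo x₀ a := (hδ (right_mem_Ioc.2 hx₀δ)).2.2
  filter_upwards [Ioo_mem_nhdsGT hδ_mem.1,
    (hg_atTop.const_mul_atTop (half_pos hε)).eventually_ge_atTop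
      (‖∫ z in δ..a, f z ∂μ‖ - ε / 2 * ∫ z in δ..a, g z ∂μ)] with y hy htail
  have hy_mem : y ∈ Ioo x₀ a := ⟨hy.1, hy.2.trans hδ_mem.2⟩
  have hfyδ : IntervalIntegrable f μ y δ := (hf y hy_mem).trans (hf δ hδ_mem).symm
  have hgyδ : IntervalIntegrable g μ y δ := (hg y hy_mem).trans (hg δ hδ_mem).symm
  have hsplit_f := intervalIntegral.integral_add_adjacent_intervals hfyδ (hf δ hδ_mem)
  have hsplit_g := intervalIntegral.integral_add_adjacent_intervals hgyδ (hg δ hδ_mem)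
  have hnear : ‖∫ z in y..δ, f z ∂μ‖ ≤ ε / 2 * ∫ z in y..δ, g z ∂μ := by
    rw [← intervalIntegral.integral_const_mul]
    refine intervalIntegral.norm_integral_le_of_norm_le hy.2.le
      (.of_forall fun z hz => ?_) (hgyδ.const_mul _)
    obtain ⟨hfz, hgz, -⟩ := hδ ⟨hy.1.trans hz.1, hz.2⟩
    rwa [Real.norm_of_nonneg hgz] at hfz
  calc ‖∫ z in y..a, f z ∂μ‖
      ≤ ‖∫ z in y..δ, f z ∂μ‖ + ‖∫ z in δ..a, f z ∂μ‖ := hsplit_f ▸ norm_add_le _ _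
    _ ≤ ε / 2 * ∫ z in y..δ, g z ∂μ + ‖∫ z in δ..a, f z ∂μ‖ := by gcongr
    _ ≤ ε * ∫ z in y..a, g z ∂μ := by rw [← hsplit_g] at htail ⊢; linarith
    _ ≤ ε * ‖∫ z in y..a, g z ∂μ‖ := by gcongr; exact Real.le_norm_self _

lemma tendsto_rpow_smul_intervalIntegral_zero {r : ℝ} (hr : 0 < r) (ha : 0 < a)
    (hf : ∀ y ∈ Ioo 0 a, IntervalIntegrable f volume y a)
    (hf_lim : Tendsto (fun z => z ^ (r + 1) • f z) (𝓝[>] 0) (𝓝 0)) :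
    Tendsto (fun y => y ^ r • ∫ z in y..a, f z) (𝓝[>] 0) (𝓝 0) := by
  have hf_littleO : f =o[𝓝[>] 0] fun z => z ^ (-(r + 1)) := by
    refine ((isBigO_refl (fun z : ℝ => z ^ (-(r + 1))) (𝓝[>] 0)).smul_isLittleO
      ((isLittleO_one_iff ℝ).2 hf_lim)).congr' ?_ (by simp)
    filter_upwards [self_mem_nhdsWithin] with z (hz : 0 < z)
    rw [smul_smul, ← Real.rpow_add hz, neg_add_cancel, Real.rpow_zero, one_smul]
  have hint_littleO := isLittleO_intervalIntegral_nhdsGT ha hf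
    (fun y hy => intervalIntegrable_rpow_of_pos hy.1 ha)
    (eventually_mem_nhdsWithin.mono fun z hz => Real.rpow_nonneg (le_of_lt hz) _)
    hf_littleO (tendsto_integral_rpow_neg_add_one_atTop hr ha)
  have hscaled := (isBigO_refl (fun y : ℝ => y ^ r) (𝓝[>] 0)).smul_isLittleO hint_littleO
  exact (isLittleO_one_iff ℝ).1 <| hscaled.trans_isBigO <|
    (tendsto_rpow_mul_integral_rpow_neg_add_one hr ha).isBigO_one ℝ

lemma tendsto_rpow_smul_intervalIntegral [CompleteSpace E] {r : ℝ} {L : E} (hr : 0 < r)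
    (ha : 0 < a) (hf : ∀ y ∈ Ioo 0 a, IntervalIntegrable f volume y a)
    (hf_lim : Tendsto (fun z => z ^ (r + 1) • f z) (𝓝[>] 0) (𝓝 L)) :
    Tendsto (fun y => y ^ r • ∫ z in y..a, f z) (𝓝[>] 0) (𝓝 (r⁻¹ • L)) := by
  have hL_int : ∀ y ∈ Ioo 0 a, IntervalIntegrable (fun z => z ^ (-(r + 1)) • L) volume y a :=
    fun y hy => (intervalIntegrable_rpow_of_pos hy.1 ha).smul_continuousOn continuousOn_const
  have hrem_lim : Tendsto (fun z => z ^ (r + 1) • (f z - z ^ (-(r + 1)) • L)) (𝓝[>] 0) (𝓝 0) := by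
    rw [← sub_self L]
    refine (hf_lim.sub_const L).congr' ?_
    filter_upwards [self_mem_nhdsWithin] with z (hz : 0 < z)
    rw [smul_sub, smul_smul, ← Real.rpow_add hz, add_neg_cancel, Real.rpow_zero, one_smul]
  have hrem := tendsto_rpow_smul_intervalIntegral_zero hr ha
    (fun y hy => (hf y hy).sub (hL_int y hy)) hrem_lim
  have hmain := (tendsto_rpow_mul_integral_rpow_neg_add_one hr ha).smul_const L
  rw [← zero_add (r⁻¹ • L)]
  refine (hrem.add hmain).congr' ?_
  filter_upwards [Ioo_mem_nhdsGT ha] with y hy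
  rw [intervalIntegral.integral_sub (hf y hy) (hL_int y hy), intervalIntegral.integral_smul_const,
    smul_sub, smul_smul, sub_add_cancel]

end DivergentIntegrals

lemma tendsto_mul_intervalIntegral_one_div {w : ℝ → ℝ} {a W : ℝ} (ha : 0 < a)
    (hw : ContinuousOn w (Ioc 0 a)) (hw_ne : ∀ z ∈ Ioc 0 a, w z ≠ 0)
    (hW : Tendsto (fun z => w z / z ^ 2) (𝓝[>] 0) (𝓝 W)) (hW_ne : W ≠ 0) :
    Tendsto (fun y => y * ∫ z in y..a, 1 / w z) (𝓝[>] 0) (𝓝 W⁻¹) := by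
  have hint : ∀ y ∈ Ioo 0 a, IntervalIntegrable (fun z => 1 / w z) volume y a := fun y hy =>
    ((continuousOn_const.div hw hw_ne).mono <|
      ordConnected_Ioc.uIcc_subset (Ioo_subset_Ioc_self hy) ⟨ha, le_rfl⟩).intervalIntegrable
  have hlim : Tendsto (fun z => z ^ (1 + 1 : ℝ) • (1 / w z)) (𝓝[>] 0) (𝓝 W⁻¹) := by
    simpa [one_add_one_eq_two, div_eq_mul_inv] using hW.inv₀ hW_ne
  simpa using tendsto_rpow_smul_intervalIntegral one_pos ha hint hlim

lemma tendsto_div_nhdsGT_zero_of_hasDerivWithinAt {f : ℝ → ℝ} {f' : ℝ}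
    (hf : HasDerivWithinAt f f' (Ioi 0) 0) (hf0 : f 0 = 0) :
    Tendsto (fun z => f z / z) (𝓝[>] 0) (𝓝 f') := by
  simpa [slope_fun_def_field, hf0] using
    (hasDerivWithinAt_iff_tendsto_slope' self_notMem_Ioi).1 hf

lemma abs_sub_lt_sub_of_abs_deriv_lt {D : Set ℝ} (hD : Convex ℝ D) {f g : ℝ → ℝ}
    (hf : ContinuousOn f D) (hg : ContinuousOn g D)
    (hf' : DifferentiableOn ℝ f (interior D)) (hg' : DifferentiableOn ℝ g (interior D))
    (hfg : ∀ z ∈ interior D, |deriv f z| < deriv g z)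
    {x y : ℝ} (hx : x ∈ D) (hy : y ∈ D) (hxy : x < y) : |f y - f x| < g y - g x := by
  have hsub : StrictMonoOn (g - f) D :=
    strictMonoOn_of_deriv_pos hD (hg.sub hf) fun z hz => by
      rw [deriv_sub (hg'.differentiableAt (isOpen_interior.mem_nhds hz))
        (hf'.differentiableAt (isOpen_interior.mem_nhds hz))]
      exact sub_pos.2 (abs_lt.1 (hfg z hz)).2
  have hadd : StrictMonoOn (g + f) D :=
    strictMonoOn_of_deriv_pos hD (hg.add hf) fun z hz => by
      rw [deriv_add (hg'.differentiableAt (isOpen_interior.mem_nhds hz))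
        (hf'.differentiableAt (isOpen_interior.mem_nhds hz))]
      linarith [(abs_lt.1 (hfg z hz)).1]
  have hsub_lt := hsub hx hy hxy
  have hadd_lt := hadd hx hy hxy
  simp only [Pi.sub_apply, Pi.add_apply] at hsub_lt hadd_lt
  exact abs_lt.2 ⟨by linarith, by linarith⟩

theorem island_profile_continuous_at_zero_general {u b φ : ℝ → ℝ} {u' b' a : ℝ} (ha : 0 < a)
    (hu : ContinuousOn u (Ioc 0 a)) (hb : ContinuousOn b (Ioc 0 a)) (hu0 : u 0 = 0) (hb0 : b 0 = 0)
    (hu' : HasDerivWithinAt u u' (Ioi 0) 0) (hb' : HasDerivWithinAt b b' (Ioi 0) 0)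
    (hb'_ne : b' ≠ 0) (hub' : u' ^ 2 ≠ b' ^ 2) (hub : ∀ z ∈ Ioc 0 a, u z ^ 2 ≠ b z ^ 2)
    (hφ : ContinuousOn φ (Icc 0 a)) (hφ_ne : ∀ z ∈ Icc 0 a, φ z ≠ 0) :
    Tendsto (fun y => b y * φ y * ((u' ^ 2 - b' ^ 2) / b') *
        ∫ z in a..y, 1 / ((u z ^ 2 - b z ^ 2) * φ z ^ 2))
      (𝓝[>] 0) (𝓝 (-(φ 0)⁻¹)) := by
  have h0 : (0 : ℝ) ∈ Icc 0 a := left_mem_Icc.2 ha.le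
  have hφ0 : φ 0 ≠ 0 := hφ_ne 0 h0
  have hD : u' ^ 2 - b' ^ 2 ≠ 0 := sub_ne_zero.2 hub'
  have hu_lim := tendsto_div_nhdsGT_zero_of_hasDerivWithinAt hu' hu0
  have hb_lim := tendsto_div_nhdsGT_zero_of_hasDerivWithinAt hb' hb0
  have hφ_lim : Tendsto φ (𝓝[>] 0) (𝓝 (φ 0)) :=
    (hφ 0 h0).mono_of_mem_nhdsWithin (Icc_mem_nhdsGT ha)
  have hw_lim : Tendsto (fun z => (u z ^ 2 - b z ^ 2) * φ z ^ 2 / z ^ 2) (𝓝[>] 0)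
      (𝓝 ((u' ^ 2 - b' ^ 2) * φ 0 ^ 2)) :=
    (((hu_lim.pow 2).sub (hb_lim.pow 2)).mul (hφ_lim.pow 2)).congr fun z => by ring
  have hint_lim : Tendsto (fun y => y * ∫ z in y..a, 1 / ((u z ^ 2 - b z ^ 2) * φ z ^ 2))
      (𝓝[>] 0) (𝓝 ((u' ^ 2 - b' ^ 2) * φ 0 ^ 2)⁻¹) :=
    tendsto_mul_intervalIntegral_one_div ha
      (((hu.pow 2).sub (hb.pow 2)).mul ((hφ.mono Ioc_subset_Icc_self).pow 2))
      (fun z hz => mul_ne_zero (sub_ne_zero.2 (hub z hz))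
        (pow_ne_zero 2 (hφ_ne z (Ioc_subset_Icc_self hz))))
      hw_lim (mul_ne_zero hD (pow_ne_zero 2 hφ0))
  have hlim := ((hb_lim.mul hφ_lim).mul_const ((u' ^ 2 - b' ^ 2) / b')).mul hint_lim.neg
  rw [show b' * φ 0 * ((u' ^ 2 - b' ^ 2) / b') * -((u' ^ 2 - b' ^ 2) * φ 0 ^ 2)⁻¹ = -(φ 0)⁻¹ by
    field_simp] at hlim
  refine hlim.congr' ?_
  filter_upwards [self_mem_nhdsWithin] with y (hy : 0 < y)
  rw [intervalIntegral.integral_symm y a]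
  field_simp

/-- Continuity of the limiting magnetic-island profile at `y = 0`: for any continuous
`φ₊` on `[0,1]` with `φ₊(0) = 1` and `φ₊ ≥ 1/2`, the profile
`b(y)·φ₊(y)·((u'(0)²−b'(0)²)/b'(0))·∫₁^y dz/((u²−b²)φ₊²)` tends to `−1` as `y → 0⁺`. -/
theorem island_profile_continuous_at_zero (u b : ℝ → ℝ)
    (hu : ContDiffOn ℝ 5 u (Icc (-1) 1)) (hb : ContDiffOn ℝ 5 b (Icc (-1) 1))
    (hu0 : u 0 = 0) (hb0 : b 0 = 0)
    (hmono : ∃ c₀ > 0, ∀ y ∈ Icc (-1:ℝ) 1, c₀ ≤ deriv b y - |deriv u y|)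
    (φp : ℝ → ℝ) (hφcont : ContinuousOn φp (Icc (0:ℝ) 1))
    (hφ0 : φp 0 = 1) (hφhalf : ∀ y ∈ Icc (0:ℝ) 1, 1/2 ≤ φp y) :
    Tendsto (fun y => b y * φp y * ((deriv u 0 ^ 2 - deriv b 0 ^ 2) / deriv b 0) *
        ∫ z in (1:ℝ)..y, 1 / ((u z ^ 2 - b z ^ 2) * φp z ^ 2))
      (𝓝[>] (0:ℝ)) (𝓝 (-1)) := by
  obtain ⟨c₀, hc₀, hmono⟩ := hmono
  have hderiv : ∀ y ∈ Icc (-1 : ℝ) 1, |deriv u y| < deriv b y := fun y hy => by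
    linarith [hmono y hy]
  have hnhds : Icc (-1 : ℝ) 1 ∈ 𝓝 0 := Icc_mem_nhds (by norm_num) one_pos
  have h0 : (0 : ℝ) ∈ Icc (-1) 1 := mem_of_mem_nhds hnhds
  have hIoc : Ioc (0 : ℝ) 1 ⊆ Icc (-1) 1 := fun z hz => ⟨by linarith [hz.1], hz.2⟩
  have hu_diff := hu.differentiableOn (by norm_num)
  have hb_diff := hb.differentiableOn (by norm_num)
  have hlt : ∀ z ∈ Ioc (0 : ℝ) 1, |u z| < b z := fun z hz => by
    simpa [hu0, hb0] using abs_sub_lt_sub_of_abs_deriv_lt (convex_Icc (-1) 1) hu.continuousOn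
      hb.continuousOn (hu_diff.mono interior_subset) (hb_diff.mono interior_subset)
      (fun z hz => hderiv z (interior_subset hz)) h0 (hIoc hz) hz.1
  have hne {s t : ℝ} (h : |s| < t) : s ^ 2 ≠ t ^ 2 := (sq_lt_sq.2 (h.trans_le (le_abs_self t))).ne
  simpa [hφ0] using island_profile_continuous_at_zero_general one_pos
    (hu.continuousOn.mono hIoc) (hb.continuousOn.mono hIoc) hu0 hb0
    (hu_diff.hasDerivAt hnhds).hasDerivWithinAt (hb_diff.hasDerivAt hnhds).hasDerivWithinAt
    ((abs_nonneg _).trans_lt (hderiv 0 h0)).ne' (hne (hderiv 0 h0))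
    (fun z hz => hne (hlt z hz)) hφcont
    (fun z hz => (one_half_pos.trans_le (hφhalf z hz)).ne')
end

section
/- Let k, k₀ ∈ ℝ with k₀ > |k| ≥ 0, let u(y) = k·y and b(y) = k₀·y, and let α be a nonzero real number. Define φ₊ : [0,1] → ℝ by φ₊(0) = 1 and φ₊(y) = sinh(αy)/(αy) for y ∈ (0,1]. Then: (i) φ₊ is continuous on [0,1], continuously differentiable with ∂_yφ₊(0) = 0, φ₊(y) ≥ 1, and y ↦ (u(y)² − b(y)²)·∂_yφ₊(y) is differentiable on [0,1] with derivative α²(u(y)² − b(y)²)φ₊(y); (ii) for every y ∈ (0,1], b(y)·φ₊(y)·((u'(0)² − b'(0)²)/b'(0))·∫₁^y dz/((u(z)² − b(z)²)·φ₊(z)²) = −sinh(α(1−y))/sinh(α). In particular the limiting magnetic-island profile b·Γ⁺ satisfies (∂_y² − α²)(bΓ⁺) = 0 with bΓ⁺(0) = −1 and bΓ⁺(1) = 0. -/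
open Filter Set Topology

/-- The explicit regular solution of the homogeneous Sturmian equation for the linear
profiles `u(y) = ky`, `b(y) = k₀y`: `φ₊(y) = sinh(αy)/(αy)` (with value `1` at `y = 0`). -/
noncomputable def phiPlusLinear (α : ℝ) (y : ℝ) : ℝ :=
  if y = 0 then 1 else Real.sinh (α * y) / (α * y)

/-!
The function `w(y) = y φ₊(y) = sinh(αy)/α` solves `w'' = α² w`. Since `y² φ₊' = y w' - w` has
derivative `y w''`, this gives `(y² φ₊')' = α² y² φ₊`; for linear profiles `u² - b²` is a constant
multiple of `y²`, so this is the Sturmian equation. The integrand of `Γ⁺` is a constant multiple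
of `1/w²`, and reduction of order applies: for any other solution `v` of `v'' = α² v`, the
derivative of `v/w` is the constant Wronskian of `w` and `v` divided by `w²`. Taking
`v(y) = sinh(α(y - 1))`, which vanishes at the wall `y = 1`, shows that `w(y) ∫₁^y dz/w²` is a
constant multiple of `v(y)`.
-/

section Derivatives

variable {𝕜 E : Type*} [NontriviallyNormedField 𝕜] [NormedAddCommGroup E] [NormedSpace 𝕜 E]

theorem analyticAt_dslope {f : 𝕜 → E} {a x : 𝕜} (hf : AnalyticAt 𝕜 f x) :
    AnalyticAt 𝕜 (dslope f a) x := by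
  obtain rfl | hx := eq_or_ne x a
  · obtain ⟨p, hp⟩ := hf
    exact ⟨_, hp.has_fpower_series_dslope_fslope⟩
  · have hslope : AnalyticAt 𝕜 (slope f a) x :=
      ((analyticAt_id.sub analyticAt_const).inv (sub_ne_zero.2 hx)).smul (hf.sub analyticAt_const)
    exact hslope.congr (dslope_eventuallyEq_slope_of_ne f hx).symm

theorem deriv_zero_of_even [IsAddTorsionFree E] {f : 𝕜 → E} (hf : Function.Even f) :
    deriv f 0 = 0 := by
  have hneg := deriv_comp_neg f 0
  rw [funext hf, neg_zero] at hneg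
  exact self_eq_neg.1 hneg

theorem hasDerivAt_sq_smul_deriv {f : 𝕜 → E} {x : 𝕜} {w'' : E}
    (hf : ∀ᶠ z in 𝓝 x, DifferentiableAt 𝕜 f z)
    (hw : HasDerivAt (deriv fun z ↦ z • f z) w'' x) :
    HasDerivAt (fun z ↦ z ^ 2 • deriv f z) (x • w'') x := by
  have hprod {z : 𝕜} (hz : DifferentiableAt 𝕜 f z) :
      HasDerivAt (fun z ↦ z • f z) (z • deriv f z + f z) z := by
    simpa using (hasDerivAt_id z).fun_smul hz.hasDerivAt
  have heq : (fun z ↦ z ^ 2 • deriv f z) =ᶠ[𝓝 x]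
      fun z ↦ z • deriv (fun z ↦ z • f z) z - z • f z := by
    filter_upwards [hf] with z hz
    rw [(hprod hz).deriv]
    module
  have hx := hprod hf.self_of_nhds
  refine HasDerivAt.congr_of_eventuallyEq ?_ heq
  refine (((hasDerivAt_id x).fun_smul hw).fun_sub hx).congr_deriv ?_
  simp [hx.deriv]

end Derivatives

section Sinh

open Real

theorem one_le_sinh_div_self {x : ℝ} (hx : x ≠ 0) : 1 ≤ sinh x / x := by
  rcases hx.lt_or_gt with hneg | hpos
  · exact (one_le_div_of_neg hneg).2 (sinh_le_self_iff.2 hneg.le)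
  · exact (one_le_div hpos).2 (self_le_sinh_iff.2 hpos.le)

theorem hasDerivAt_sinh_sub_div_sinh (a : ℝ) {x : ℝ} (hx : x ≠ 0) :
    HasDerivAt (fun z ↦ sinh (z - a) / sinh z) (sinh a / sinh x ^ 2) x := by
  have hquot := ((hasDerivAt_id x).sub_const a).sinh.fun_div (hasDerivAt_sinh x) (sinh_ne_zero.2 hx)
  have hwronskian : cosh (x - a) * sinh x - sinh (x - a) * cosh x = sinh a := by
    have hsub := sinh_sub x (x - a)
    rw [sub_sub_cancel] at hsub
    linarith
  simpa [hwronskian] using hquot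

theorem integral_one_div_sinh_sq {a b : ℝ} (h0 : 0 ∉ uIcc a b) :
    ∫ z in a..b, 1 / sinh z ^ 2 = sinh (b - a) / (sinh a * sinh b) := by
  have hsinh : ∀ z ∈ uIcc a b, sinh z ≠ 0 := fun z hz ↦
    sinh_ne_zero.2 (ne_of_mem_of_not_mem hz h0)
  have ha : sinh a ≠ 0 := hsinh a left_mem_uIcc
  have hint : IntervalIntegrable (fun z ↦ sinh a / sinh z ^ 2) MeasureTheory.volume a b :=
    (continuousOn_const.div (by fun_prop) fun z hz ↦ pow_ne_zero 2 (hsinh z hz)).intervalIntegrable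
  have hftc : ∫ z in a..b, sinh a / sinh z ^ 2 = sinh (b - a) / sinh b := by
    rw [intervalIntegral.integral_eq_sub_of_hasDerivAt (fun z hz ↦
      hasDerivAt_sinh_sub_div_sinh a (ne_of_mem_of_not_mem hz h0)) hint]
    simp
  rw [div_mul_eq_div_div_swap, ← hftc, ← intervalIntegral.integral_div]
  simp only [div_right_comm, div_self ha]

end Sinh

section PhiPlusLinear

open Real

variable {α : ℝ}

theorem mul_phiPlusLinear (α y : ℝ) : y * phiPlusLinear α y = sinh (α * y) / α := by
  rw [phiPlusLinear]
  split_ifs with hy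
  · simp [hy]
  · field_simp

theorem phiPlusLinear_eq_dslope_sinh (hα : α ≠ 0) (y : ℝ) :
    phiPlusLinear α y = dslope sinh 0 (α * y) := by
  rw [phiPlusLinear]
  split_ifs with hy
  · simp [hy]
  · simp [dslope_of_ne _ (mul_ne_zero hα hy), slope_def_field]

theorem analyticAt_phiPlusLinear (hα : α ≠ 0) (y : ℝ) : AnalyticAt ℝ (phiPlusLinear α) y := by
  rw [funext (phiPlusLinear_eq_dslope_sinh hα)]
  exact (analyticAt_dslope analyticAt_sinh).comp (analyticAt_const.mul analyticAt_id)

theorem phiPlusLinear_even (α : ℝ) : Function.Even (phiPlusLinear α) := fun y ↦ by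
  simp [phiPlusLinear]

theorem one_le_phiPlusLinear (hα : α ≠ 0) (y : ℝ) : 1 ≤ phiPlusLinear α y := by
  rw [phiPlusLinear]
  split_ifs with hy
  · exact le_rfl
  · exact one_le_sinh_div_self (mul_ne_zero hα hy)

theorem hasDerivAt_sq_mul_deriv_phiPlusLinear (hα : α ≠ 0) (y : ℝ) :
    HasDerivAt (fun z ↦ z ^ 2 * deriv (phiPlusLinear α) z)
      (α ^ 2 * y ^ 2 * phiPlusLinear α y) y := by
  have hlin (z : ℝ) : HasDerivAt (fun z ↦ α * z) α z := by
    simpa using (hasDerivAt_id z).const_mul α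
  have hfirst : (deriv fun z ↦ z * phiPlusLinear α z) = fun z ↦ cosh (α * z) := by
    funext z
    simp only [mul_phiPlusLinear]
    rw [((hlin z).sinh.div_const α).deriv, mul_div_cancel_right₀ _ hα]
  have hsecond : HasDerivAt (deriv fun z ↦ z * phiPlusLinear α z) (sinh (α * y) * α) y := by
    rw [hfirst]
    exact (hlin y).cosh
  have hdiff : ∀ᶠ z in 𝓝 y, DifferentiableAt ℝ (phiPlusLinear α) z :=
    .of_forall fun z ↦ (analyticAt_phiPlusLinear hα z).differentiableAt
  refine (hasDerivAt_sq_smul_deriv hdiff hsecond).congr_deriv ?_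
  have hsinh : sinh (α * y) = α * (y * phiPlusLinear α y) := by
    rw [mul_phiPlusLinear, mul_div_cancel₀ _ hα]
  rw [hsinh, smul_eq_mul]
  ring

theorem integral_one_div_mul_phiPlusLinear_sq (hα : α ≠ 0) {a y : ℝ} (h0 : 0 ∉ uIcc a y) :
    ∫ z in a..y, 1 / (z * phiPlusLinear α z) ^ 2 =
      α * sinh (α * (y - a)) / (sinh (α * a) * sinh (α * y)) := by
  have h0' : 0 ∉ uIcc (α * a) (α * y) := by
    rw [← image_const_mul_uIcc]
    rintro ⟨z, hz, hz0⟩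
    exact h0 ((mul_eq_zero_iff_left hα).1 hz0 ▸ hz)
  calc ∫ z in a..y, 1 / (z * phiPlusLinear α z) ^ 2
      = ∫ z in a..y, α ^ 2 * (1 / sinh (α * z) ^ 2) := by
        simp only [mul_phiPlusLinear, div_pow, one_div_div, mul_one_div]
    _ = α * (α * ∫ z in a..y, 1 / sinh (α * z) ^ 2) := by
        rw [intervalIntegral.integral_const_mul, sq, mul_assoc]
    _ = α * ∫ z in α * a..α * y, 1 / sinh z ^ 2 := by
        rw [intervalIntegral.mul_integral_comp_mul_left (f := fun z ↦ 1 / sinh z ^ 2)]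
    _ = α * sinh (α * (y - a)) / (sinh (α * a) * sinh (α * y)) := by
        rw [integral_one_div_sinh_sq h0', mul_sub, mul_div_assoc]

theorem mul_phiPlusLinear_mul_integral (hα : α ≠ 0) {a y : ℝ} (h0 : 0 ∉ uIcc a y) :
    y * phiPlusLinear α y * ∫ z in a..y, 1 / (z * phiPlusLinear α z) ^ 2 =
      -(sinh (α * (a - y)) / sinh (α * a)) := by
  have hy : sinh (α * y) ≠ 0 :=
    sinh_ne_zero.2 (mul_ne_zero hα (ne_of_mem_of_not_mem right_mem_uIcc h0))
  rw [integral_one_div_mul_phiPlusLinear_sq hα h0, mul_phiPlusLinear, ← neg_sub a y, mul_neg,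
    sinh_neg]
  field_simp

end PhiPlusLinear

theorem island_profile_linear_case_general {k k₀ α : ℝ} (hk₀ : k₀ ≠ 0) (hk : k ^ 2 ≠ k₀ ^ 2)
    (hα : α ≠ 0) :
    (∀ y, AnalyticAt ℝ (phiPlusLinear α) y) ∧
    deriv (phiPlusLinear α) 0 = 0 ∧
    (∀ y, 1 ≤ phiPlusLinear α y) ∧
    (∀ y, HasDerivAt (fun z ↦ ((k * z) ^ 2 - (k₀ * z) ^ 2) * deriv (phiPlusLinear α) z)
      (α ^ 2 * ((k * y) ^ 2 - (k₀ * y) ^ 2) * phiPlusLinear α y) y) ∧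
    (∀ a y, 0 ∉ uIcc a y →
      (k₀ * y) * phiPlusLinear α y * ((k ^ 2 - k₀ ^ 2) / k₀) *
          (∫ z in a..y, 1 / (((k * z) ^ 2 - (k₀ * z) ^ 2) * (phiPlusLinear α z) ^ 2))
        = -(Real.sinh (α * (a - y)) / Real.sinh (α * a))) := by
  have hprofile (z : ℝ) : (k * z) ^ 2 - (k₀ * z) ^ 2 = (k ^ 2 - k₀ ^ 2) * z ^ 2 := by ring
  refine ⟨analyticAt_phiPlusLinear hα, deriv_zero_of_even (phiPlusLinear_even α),
    one_le_phiPlusLinear hα, fun y ↦ ?_, fun a y h0 ↦ ?_⟩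
  · simp only [hprofile, mul_assoc (k ^ 2 - k₀ ^ 2)]
    refine ((hasDerivAt_sq_mul_deriv_phiPlusLinear hα y).const_mul _).congr_deriv ?_
    ring
  · have hk' : k ^ 2 - k₀ ^ 2 ≠ 0 := sub_ne_zero.2 hk
    have hintegrand (z : ℝ) : 1 / (((k * z) ^ 2 - (k₀ * z) ^ 2) * phiPlusLinear α z ^ 2) =
        (k ^ 2 - k₀ ^ 2)⁻¹ * (1 / (z * phiPlusLinear α z) ^ 2) := by
      rw [hprofile, mul_assoc, ← mul_pow, inv_mul_eq_div, div_div, mul_comm]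
    simp only [hintegrand, intervalIntegral.integral_const_mul]
    rw [← mul_phiPlusLinear_mul_integral hα h0]
    field_simp

/-- For linear profiles `u(y) = ky`, `b(y) = k₀y` with `k₀ > |k| ≥ 0` the limiting
magnetic-island profile is explicit: `φ₊(y) = sinh(αy)/(αy)` is a regular solution of the
homogeneous Sturmian equation, and
`b(y)Γ⁺(y) = b(y)·φ₊(y)·((u'(0)²−b'(0)²)/b'(0))·∫₁^y dz/((u²−b²)φ₊²)
           = −sinh(α(1−y))/sinh α` for `y ∈ (0,1]`. -/
theorem island_profile_linear_case (k k₀ α : ℝ) (hk : |k| < k₀) (hα : α ≠ 0) :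
    ContinuousOn (phiPlusLinear α) (Icc (0:ℝ) 1) ∧
    (∀ y ∈ Icc (0:ℝ) 1, DifferentiableAt ℝ (phiPlusLinear α) y) ∧
    ContinuousOn (deriv (phiPlusLinear α)) (Icc (0:ℝ) 1) ∧
    deriv (phiPlusLinear α) 0 = 0 ∧
    (∀ y ∈ Icc (0:ℝ) 1, 1 ≤ phiPlusLinear α y) ∧
    (∀ y ∈ Icc (0:ℝ) 1,
      HasDerivAt (fun z => ((k * z) ^ 2 - (k₀ * z) ^ 2) * deriv (phiPlusLinear α) z)
        (α ^ 2 * ((k * y) ^ 2 - (k₀ * y) ^ 2) * phiPlusLinear α y) y) ∧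
    (∀ y ∈ Ioc (0:ℝ) 1,
      (k₀ * y) * phiPlusLinear α y * ((k ^ 2 - k₀ ^ 2) / k₀) *
          (∫ z in (1:ℝ)..y, 1 / (((k * z) ^ 2 - (k₀ * z) ^ 2) * (phiPlusLinear α z) ^ 2))
        = -(Real.sinh (α * (1 - y)) / Real.sinh α)) := by
  obtain ⟨hφ, hφ'₀, hφ_ge, hsturm, hΓ⟩ := island_profile_linear_case_general
    ((abs_nonneg k).trans_lt hk).ne' (sq_lt_sq.2 (hk.trans_le (le_abs_self k₀))).ne hα
  refine ⟨fun y _ ↦ (hφ y).continuousAt.continuousWithinAt, fun y _ ↦ (hφ y).differentiableAt,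
    fun y _ ↦ (hφ y).deriv.continuousAt.continuousWithinAt, hφ'₀, fun y _ ↦ hφ_ge y,
    fun y _ ↦ hsturm y, fun y hy ↦ ?_⟩
  have h0 : 0 ∉ uIcc 1 y := by simp [uIcc_of_ge hy.2, hy.1]
  simpa only [mul_one] using hΓ 1 y h0
end

section
/- Let k ≥ 1 be a natural number, let a < b < d be real numbers, let f : ℝ → ℝ be k-times continuously differentiable on [a,b] with positive (one-sided) derivative at b (derivWithin f [a,b] b > 0), and let M > f(b). Then there exists F : ℝ → ℝ which is k-times continuously differentiable on [a,d], satisfies F(x) = f(x) for all x ∈ [a,b], has F'(x) > 0 for all x ∈ [b,d], and F(d) = M. -/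
open Set

/-!
Extend `f` to a `C^k` function on `ℝ` by extending its derivative first and integrating (induction
on `k`). To the right of `b`, replace the derivative `g` of this extension by `χ g + (1 - χ) c`,
where `χ` is a smooth cutoff which is `1` up to `b` and vanishes from `e` on. If `e` is so close to
`b` that `g > 0` on `[b, e]` and `∫_b^e g < M - f b`, then the constant `c` for which the new
derivative has integral `M - f b` over `[b, d]` is positive.
-/

open Topology

section Extension

variable {E : Type*} [NormedAddCommGroup E] [NormedSpace ℝ E] [CompleteSpace E]

lemma contDiff_succ_integral {n : ℕ∞} {g : ℝ → E} (hg : ContDiff ℝ n g) (a : ℝ) :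
    ContDiff ℝ (n + 1) fun x ↦ ∫ t in a..x, g t := by
  have hderiv (x : ℝ) : HasDerivAt (fun x ↦ ∫ t in a..x, g t) (g x) x :=
    (hg.continuous.integral_hasStrictDerivAt a x).hasDerivAt
  refine contDiff_succ_iff_deriv.2 ⟨fun x ↦ (hderiv x).differentiableAt, by simp, ?_⟩
  rwa [deriv_eq hderiv]

lemma eqOn_add_integral_of_eqOn_derivWithin {f g : ℝ → E} {a b : ℝ}
    (hf : DifferentiableOn ℝ f (Icc a b)) (hg : Continuous g)
    (hfg : EqOn g (derivWithin f (Icc a b)) (Icc a b)) :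
    EqOn (fun x ↦ f a + ∫ t in a..x, g t) f (Icc a b) := by
  have hderiv (x : ℝ) : HasDerivAt (fun x ↦ f a + ∫ t in a..x, g t) (g x) x :=
    (hg.integral_hasStrictDerivAt a x).hasDerivAt.const_add _
  refine eq_of_derivWithin_eq (fun x _ ↦ (hderiv x).differentiableAt.differentiableWithinAt) hf
    (fun x hx ↦ ?_) (by simp)
  have hx' : x ∈ Icc a b := Ico_subset_Icc_self hx
  have huniq := uniqueDiffOn_Icc (hx.1.trans_lt hx.2) x hx'
  rw [(hderiv x).hasDerivWithinAt.derivWithin huniq, hfg hx']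

lemma exists_contDiff_eqOn_Icc {n : ℕ} {a b : ℝ} (hab : a < b) {f : ℝ → E}
    (hf : ContDiffOn ℝ n f (Icc a b)) :
    ∃ g : ℝ → E, ContDiff ℝ n g ∧ EqOn g f (Icc a b) := by
  induction n generalizing f with
  | zero =>
    exact ⟨IccExtend hab.le ((Icc a b).domRestrict f),
      contDiff_zero.2 hf.continuousOn.domRestrict.Icc_extend',
      fun x hx ↦ IccExtend_of_mem _ _ hx⟩
  | succ n ih =>
    obtain ⟨g, hg, hgf⟩ := ih (hf.derivWithin (uniqueDiffOn_Icc hab) (by simp))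
    exact ⟨fun x ↦ f a + ∫ t in a..x, g t,
      contDiff_const.add (by exact_mod_cast contDiff_succ_integral (n := n) hg a),
      eqOn_add_integral_of_eqOn_derivWithin (hf.differentiableOn (by simp)) hg.continuous hgf⟩

end Extension

/-- The smooth cutoff function which equals `1` on `(-∞, b]` and `0` on `[e, ∞)`, for `b < e`. It
is used to switch from one function to another between `b` and `e`. -/
noncomputable def smoothCutoff (b e x : ℝ) : ℝ :=
  Real.smoothTransition ((e - x) / (e - b))

namespace smoothCutoff

variable {b e d x : ℝ}

lemma nonneg (b e x : ℝ) : 0 ≤ smoothCutoff b e x :=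
  Real.smoothTransition.nonneg _

lemma le_one (b e x : ℝ) : smoothCutoff b e x ≤ 1 :=
  Real.smoothTransition.le_one _

lemma eq_one_of_le (hbe : b < e) (hx : x ≤ b) : smoothCutoff b e x = 1 :=
  Real.smoothTransition.one_of_one_le ((one_le_div (sub_pos.2 hbe)).2 (by linarith))

lemma lt_one_of_lt (hbe : b < e) (hx : b < x) : smoothCutoff b e x < 1 :=
  Real.smoothTransition.lt_one_of_lt_one ((div_lt_one (sub_pos.2 hbe)).2 (by linarith))

lemma eq_zero_of_le (hbe : b < e) (hx : e ≤ x) : smoothCutoff b e x = 0 :=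
  Real.smoothTransition.zero_of_nonpos
    (div_nonpos_of_nonpos_of_nonneg (sub_nonpos.2 hx) (sub_pos.2 hbe).le)

lemma contDiff {n : ℕ∞} (b e : ℝ) : ContDiff ℝ n (smoothCutoff b e) :=
  Real.smoothTransition.contDiff.comp ((contDiff_const.sub contDiff_id).div_const _)

lemma continuous (b e : ℝ) : Continuous (smoothCutoff b e) :=
  (contDiff (n := 0) b e).continuous

lemma integral_mul_le {g : ℝ → ℝ} (hg : Continuous g) (hbe : b < e) (hed : e ≤ d)
    (hg₀ : ∀ x ∈ Icc b e, 0 ≤ g x) :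
    ∫ x in b..d, smoothCutoff b e x * g x ≤ ∫ x in b..e, g x := by
  have hint (p q : ℝ) :
      IntervalIntegrable (fun x ↦ smoothCutoff b e x * g x) MeasureTheory.volume p q :=
    ((continuous b e).mul hg).intervalIntegrable p q
  have htail : ∫ x in e..d, smoothCutoff b e x * g x = 0 := by
    rw [← intervalIntegral.integral_zero (a := e) (b := d) (μ := MeasureTheory.volume)]
    refine intervalIntegral.integral_congr fun x hx ↦ ?_
    rw [uIcc_of_le hed] at hx
    simp only [eq_zero_of_le hbe hx.1, zero_mul]
  rw [← intervalIntegral.integral_add_adjacent_intervals (hint b e) (hint e d), htail, add_zero]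
  exact intervalIntegral.integral_mono_on hbe.le (hint b e) (hg.intervalIntegrable b e)
    fun x hx ↦ mul_le_of_le_one_left (hg₀ x hx) (le_one b e x)

lemma integral_one_sub_pos (hbe : b < e) (hbd : b < d) :
    0 < ∫ x in b..d, (1 - smoothCutoff b e x) :=
  intervalIntegral.intervalIntegral_pos_of_pos_on
    ((continuous_const.sub (continuous b e)).intervalIntegrable b d)
    (fun _ hx ↦ sub_pos.2 (lt_one_of_lt hbe hx.1)) hbd

lemma mul_add_one_sub_mul_pos {c y : ℝ} (hbe : b < e) (hc : 0 < c) (hy : x ≤ e → 0 < y) :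
    0 < smoothCutoff b e x * y + (1 - smoothCutoff b e x) * c := by
  rcases le_total x e with hx | hx
  · exact convex_Ioi (0 : ℝ) (hy hx) hc (nonneg b e x) (sub_nonneg.2 (le_one b e x))
      (add_sub_cancel _ _)
  · simpa [eq_zero_of_le hbe hx] using hc

end smoothCutoff

lemma exists_mem_Ioo_pos_integral_lt {g : ℝ → ℝ} {b d s : ℝ} (hg : Continuous g) (hb : 0 < g b)
    (hbd : b < d) (hs : 0 < s) :
    ∃ e ∈ Ioo b d, (∀ x ∈ Icc b e, 0 < g x) ∧ ∫ x in b..e, g x < s := by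
  have hpos : ∀ᶠ e in 𝓝[>] b, ∀ x ∈ Icc b e, 0 < g x := by
    obtain ⟨u, hbu, hu⟩ := mem_nhdsGE_iff_exists_Ico_subset.1
      (mem_nhdsWithin_of_mem_nhds (hg.continuousAt.eventually_const_lt hb))
    filter_upwards [Ioo_mem_nhdsGT hbu] with e he x hx using hu ⟨hx.1, hx.2.trans_lt he.2⟩
  have hlt : ∀ᶠ e in 𝓝[>] b, ∫ x in b..e, g x < s :=
    ((hg.integral_hasStrictDerivAt b b).hasDerivAt.continuousAt.eventually_lt_const
      (by simpa using hs)).filter_mono nhdsWithin_le_nhds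
  obtain ⟨e, he, hpos, hlt⟩ := (Filter.Eventually.and (Ioo_mem_nhdsGT hbd) (hpos.and hlt)).exists
  exact ⟨e, he, hpos, hlt⟩

lemma exists_contDiff_eqOn_Iic_pos_integral_eq {n : ℕ∞} {g : ℝ → ℝ} {b d s : ℝ}
    (hg : ContDiff ℝ n g) (hb : 0 < g b) (hbd : b < d) (hs : 0 < s) :
    ∃ h : ℝ → ℝ, ContDiff ℝ n h ∧ EqOn h g (Iic b) ∧ (∀ x ∈ Ici b, 0 < h x) ∧
      ∫ x in b..d, h x = s := by
  obtain ⟨e, ⟨hbe, hed⟩, hpos, hlt⟩ := exists_mem_Ioo_pos_integral_lt hg.continuous hb hbd hs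
  set χ := smoothCutoff b e
  have hχ : ContDiff ℝ n χ := smoothCutoff.contDiff b e
  have hA : ∫ x in b..d, χ x * g x < s :=
    (smoothCutoff.integral_mul_le hg.continuous hbe hed.le fun x hx ↦ (hpos x hx).le).trans_lt hlt
  have hB : 0 < ∫ x in b..d, (1 - χ x) := smoothCutoff.integral_one_sub_pos hbe hbd
  set c := (s - ∫ x in b..d, χ x * g x) / ∫ x in b..d, (1 - χ x) with hc
  have hc₀ : 0 < c := div_pos (sub_pos.2 hA) hB
  have hχg : ContDiff ℝ n fun x ↦ χ x * g x := hχ.mul hg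
  have hcχ : ContDiff ℝ n fun x ↦ (1 - χ x) * c := (contDiff_const.sub hχ).mul contDiff_const
  refine ⟨fun x ↦ χ x * g x + (1 - χ x) * c, hχg.add hcχ, fun x hx ↦ ?_, fun x hx ↦
    smoothCutoff.mul_add_one_sub_mul_pos hbe hc₀ fun hxe ↦ hpos x ⟨hx, hxe⟩, ?_⟩
  · simp [χ, smoothCutoff.eq_one_of_le hbe hx]
  · rw [intervalIntegral.integral_add (hχg.continuous.intervalIntegrable b d)
      (hcχ.continuous.intervalIntegrable b d), intervalIntegral.integral_mul_const, hc,
      mul_div_cancel₀ _ hB.ne', add_sub_cancel]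

lemma exists_contDiff_eqOn_Iic_deriv_pos {n : ℕ∞} {f : ℝ → ℝ} {b d M : ℝ}
    (hf : ContDiff ℝ (n + 1) f) (hb : 0 < deriv f b) (hbd : b < d) (hM : f b < M) :
    ∃ F : ℝ → ℝ, ContDiff ℝ (n + 1) F ∧ EqOn F f (Iic b) ∧ (∀ x ∈ Ici b, 0 < deriv F x) ∧
      F d = M := by
  obtain ⟨hdiff, -, hf'⟩ := contDiff_succ_iff_deriv.1 hf
  obtain ⟨h, hh, hhf, hpos, hint⟩ :=
    exists_contDiff_eqOn_Iic_pos_integral_eq hf' hb hbd (sub_pos.2 hM)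
  refine ⟨fun x ↦ f b + ∫ t in b..x, h t, contDiff_const.add (contDiff_succ_integral hh b),
    fun x hx ↦ ?_, fun x hx ↦ ?_, by simp [hint]⟩
  · have hFTC : ∫ t in b..x, h t = f x - f b := by
      rw [intervalIntegral.integral_congr fun t ht ↦
        hhf (ht.2.trans (max_eq_left (mem_Iic.1 hx)).le)]
      exact intervalIntegral.integral_deriv_eq_sub (fun t _ ↦ hdiff t)
        (hf'.continuous.intervalIntegrable b x)
    simp [hFTC]
  · rw [deriv_const_add, hh.continuous.deriv_integral]
    exact hpos x hx

/-- The `C^k` extension lemma: a `C^k` function on `[a,b]` with positive one-sided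
derivative at `b` extends to a `C^k` function on `[a,d]` which is strictly increasing
(positive derivative) on `[b,d]` and takes any prescribed value `M > f(b)` at `d`. -/
theorem ck_monotone_extension (k : ℕ) (hk : 1 ≤ k) (a b d : ℝ) (hab : a < b) (hbd : b < d)
    (f : ℝ → ℝ) (M : ℝ)
    (hf : ContDiffOn ℝ k f (Icc a b))
    (hf' : 0 < derivWithin f (Icc a b) b)
    (hM : f b < M) :
    ∃ F : ℝ → ℝ, ContDiffOn ℝ k F (Icc a d) ∧
      (∀ x ∈ Icc a b, F x = f x) ∧
      (∀ x ∈ Icc b d, 0 < derivWithin F (Icc a d) x) ∧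
      F d = M := by
  obtain ⟨n, rfl⟩ := Nat.exists_eq_add_of_le' hk
  obtain ⟨g, hg, hgf⟩ := exists_contDiff_eqOn_Icc hab hf
  have hb : b ∈ Icc a b := right_mem_Icc.2 hab.le
  have hg' : 0 < deriv g b := by
    rwa [← (hg.differentiable (by simp) b).derivWithin (uniqueDiffOn_Icc hab b hb),
      derivWithin_congr hgf (hgf hb)]
  obtain ⟨F, hF, hFg, hF', hFd⟩ :=
    exists_contDiff_eqOn_Iic_deriv_pos (n := n) hg hg' hbd (by rwa [hgf hb])
  refine ⟨F, hF.contDiffOn, fun x hx ↦ (hFg hx.2).trans (hgf hx), fun x hx ↦ ?_, hFd⟩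
  have hx' : x ∈ Icc a d := Icc_subset_Icc_left hab.le hx
  rw [(hF.differentiable (by simp) x).derivWithin (uniqueDiffOn_Icc (hab.trans hbd) x hx')]
  exact hF' x hx.1
end

section
/- Let u, b : ℝ → ℝ be continuous on [−1,1] with |u(y)| ≤ |b(y)| for all y ∈ [−1,1] (Stern stability condition), let α ∈ ℝ, and let c ∈ ℂ with Im c ≠ 0. Set H(y) := (u(y) + b(y) − c)(u(y) − b(y) − c). If Ψ : ℝ → ℂ is continuously differentiable on [−1,1], the function y ↦ H(y)·Ψ'(y) is differentiable on [−1,1] with (HΨ')'(y) = α²H(y)Ψ(y) for all y ∈ [−1,1], and Ψ(−1) = Ψ(1) = 0, then Ψ(y) = 0 for all y ∈ [−1,1]. -/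
open Set

/-!
Multiply `(pψ')' = qψ` by the conjugate of `ψ`: the real part of `⟪ψ, pψ'⟫` vanishes at both
endpoints and has derivative `Re p |ψ'|² + Re q |ψ|²`. If `Re p > 0` and `Re q ≥ 0` it is monotone,
hence constant, which forces `ψ' = 0`. The weight `ℋ` itself has no sign, but
`Im (c̄ ℋ) = Im c * (|c|² + b² - u²)`, so multiplying the equation by `-i c̄ / Im c` turns it into
one with `Re p > 0`.
-/

section SturmUniqueness

variable {x₁ x₂ : ℝ}

theorem hasDerivWithinAt_eq_zero_of_nonneg_of_endpoints_eq {f f' : ℝ → ℝ} (hx : x₁ < x₂)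
    (hf : ∀ y ∈ Icc x₁ x₂, HasDerivWithinAt f (f' y) (Icc x₁ x₂) y)
    (hf' : ∀ y ∈ Icc x₁ x₂, 0 ≤ f' y) (hend : f x₁ = f x₂) :
    ∀ y ∈ Icc x₁ x₂, f' y = 0 := by
  have hmono : MonotoneOn f (Icc x₁ x₂) :=
    monotoneOn_of_hasDerivWithinAt_nonneg (convex_Icc _ _)
      (fun y hy => (hf y hy).continuousWithinAt)
      (fun y hy => (hf y (interior_subset hy)).mono interior_subset)
      (fun y hy => hf' y (interior_subset hy))
  have hconst : ∀ y ∈ Icc x₁ x₂, f y = f x₁ := fun y hy =>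
    le_antisymm ((hmono hy (right_mem_Icc.2 hx.le) hy.2).trans_eq hend.symm)
      (hmono (left_mem_Icc.2 hx.le) hy hy.1)
  intro y hy
  exact (uniqueDiffOn_Icc hx y hy).eq_deriv _ (hf y hy)
    ((hasDerivWithinAt_const y _ _).congr hconst (hconst y hy))

variable {𝕜 E : Type*} [RCLike 𝕜] [NormedAddCommGroup E] [InnerProductSpace 𝕜 E]
  [NormedSpace ℝ E] {p q : ℝ → 𝕜} {ψ ψ' : ℝ → E}

theorem hasDerivWithinAt_re_inner_smul_deriv {s : Set ℝ} {y : ℝ}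
    (hψ : HasDerivWithinAt ψ (ψ' y) s y)
    (hode : HasDerivWithinAt (fun z => p z • ψ' z) (q y • ψ y) s y) :
    HasDerivWithinAt (fun z => RCLike.re (inner 𝕜 (ψ z) (p z • ψ' z)))
      (RCLike.re (p y) * ‖ψ' y‖ ^ 2 + RCLike.re (q y) * ‖ψ y‖ ^ 2) s y := by
  refine ((RCLike.reCLM (K := 𝕜)).hasFDerivAt.comp_hasDerivWithinAt y
    (hψ.inner 𝕜 hode)).congr_deriv ?_
  rw [RCLike.reCLM_apply, map_add, inner_smul_right, inner_smul_right,
    inner_self_eq_norm_sq_to_K, inner_self_eq_norm_sq_to_K, ← RCLike.ofReal_pow,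
    ← RCLike.ofReal_pow, RCLike.re_mul_ofReal, RCLike.re_mul_ofReal, add_comm]

theorem eq_zero_of_sturm_of_re_pos
    (hψ : ∀ y ∈ Icc x₁ x₂, HasDerivWithinAt ψ (ψ' y) (Icc x₁ x₂) y)
    (hode : ∀ y ∈ Icc x₁ x₂,
      HasDerivWithinAt (fun z => p z • ψ' z) (q y • ψ y) (Icc x₁ x₂) y)
    (hp : ∀ y ∈ Icc x₁ x₂, 0 < RCLike.re (p y)) (hq : ∀ y ∈ Icc x₁ x₂, 0 ≤ RCLike.re (q y))
    (h₁ : ψ x₁ = 0) (h₂ : ψ x₂ = 0) :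
    ∀ y ∈ Icc x₁ x₂, ψ y = 0 := by
  intro y hy
  rcases (hy.1.trans hy.2).eq_or_lt with rfl | hx
  · rw [le_antisymm hy.2 hy.1, h₁]
  have henergy : ∀ z ∈ Icc x₁ x₂,
      RCLike.re (p z) * ‖ψ' z‖ ^ 2 + RCLike.re (q z) * ‖ψ z‖ ^ 2 = 0 :=
    hasDerivWithinAt_eq_zero_of_nonneg_of_endpoints_eq hx
      (fun z hz => hasDerivWithinAt_re_inner_smul_deriv (hψ z hz) (hode z hz))
      (fun z hz => add_nonneg (mul_nonneg (hp z hz).le (sq_nonneg _))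
        (mul_nonneg (hq z hz) (sq_nonneg _)))
      (by simp only [h₁, h₂, inner_zero_left])
  have hψ'_zero : ∀ z ∈ Icc x₁ x₂, ψ' z = 0 := by
    intro z hz
    have hle : RCLike.re (p z) * ‖ψ' z‖ ^ 2 ≤ 0 := by
      linarith [henergy z hz, mul_nonneg (hq z hz) (sq_nonneg ‖ψ z‖)]
    have hnorm : ‖ψ' z‖ ^ 2 ≤ 0 := nonpos_of_mul_nonpos_right hle (hp z hz)
    exact norm_eq_zero.1 (sq_nonpos_iff _ |>.1 hnorm)
  have hconst : ψ y = ψ x₁ :=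
    constant_of_derivWithin_zero (fun z hz => (hψ z hz).differentiableWithinAt)
      (fun z hz => by
        have hz' := Ico_subset_Icc_self hz
        rw [(hψ z hz').derivWithin (uniqueDiffOn_Icc hx z hz'), hψ'_zero z hz'])
      y hy
  rw [hconst, h₁]

end SturmUniqueness

section SternWeight

open scoped ComplexConjugate

/-- The coefficient `ℋ` of the Stern problem, as a function of the values of the profiles `u` and
`b` at one point and the spectral parameter `c`. -/
def sternWeight (u b : ℝ) (c : ℂ) : ℂ :=
  (((u + b : ℝ) : ℂ) - c) * (((u - b : ℝ) : ℂ) - c)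

/-- The constant `-i c̄ / Im c` that rotates `sternWeight u b c` into the right half-plane when
`u² < b² + |c|²`; only meaningful for `Im c ≠ 0`. -/
noncomputable def sternMultiplier (c : ℂ) : ℂ :=
  -Complex.I * conj c / (c.im : ℂ)

theorem im_conj_mul_sternWeight (u b : ℝ) (c : ℂ) :
    (conj c * sternWeight u b c).im = c.im * (‖c‖ ^ 2 + b ^ 2 - u ^ 2) := by
  rw [Complex.sq_norm, Complex.normSq_apply]
  simp only [sternWeight, Complex.mul_im, Complex.mul_re, Complex.conj_re, Complex.conj_im,
    Complex.sub_re, Complex.sub_im, Complex.ofReal_re, Complex.ofReal_im]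
  ring

theorem re_sternMultiplier_mul_sternWeight (u b : ℝ) {c : ℂ} (hc : c.im ≠ 0) :
    (sternMultiplier c * sternWeight u b c).re = ‖c‖ ^ 2 + b ^ 2 - u ^ 2 := by
  calc (sternMultiplier c * sternWeight u b c).re
      = (-Complex.I * (conj c * sternWeight u b c) / (c.im : ℂ)).re := by
        rw [sternMultiplier]
        congr 1
        ring
    _ = (conj c * sternWeight u b c).im / c.im := by
        rw [Complex.div_ofReal_re, neg_mul, Complex.neg_re, Complex.I_mul_re, neg_neg]
    _ = ‖c‖ ^ 2 + b ^ 2 - u ^ 2 := by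
        rw [im_conj_mul_sternWeight, mul_div_cancel_left₀ _ hc]

end SternWeight

theorem stern_stability_general {x₁ x₂ : ℝ} {u b : ℝ → ℝ} (α : ℝ) {c : ℂ} (hc : c.im ≠ 0)
    (hub : ∀ y ∈ Icc x₁ x₂, u y ^ 2 < b y ^ 2 + ‖c‖ ^ 2) {ψ ψ' : ℝ → ℂ}
    (hψ : ∀ y ∈ Icc x₁ x₂, HasDerivWithinAt ψ (ψ' y) (Icc x₁ x₂) y)
    (hode : ∀ y ∈ Icc x₁ x₂,
      HasDerivWithinAt (fun z => sternWeight (u z) (b z) c * ψ' z)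
        ((α : ℂ) ^ 2 * sternWeight (u y) (b y) c * ψ y) (Icc x₁ x₂) y)
    (h₁ : ψ x₁ = 0) (h₂ : ψ x₂ = 0) :
    ∀ y ∈ Icc x₁ x₂, ψ y = 0 := by
  let p : ℝ → ℂ := fun y => sternMultiplier c * sternWeight (u y) (b y) c
  let q : ℝ → ℂ := fun y => ((α ^ 2 : ℝ) : ℂ) * p y
  have hp : ∀ y ∈ Icc x₁ x₂, 0 < (p y).re := fun y hy => by
    rw [re_sternMultiplier_mul_sternWeight _ _ hc]
    linarith [hub y hy]
  have hq : ∀ y ∈ Icc x₁ x₂, 0 ≤ (q y).re := fun y hy => by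
    rw [Complex.re_ofReal_mul]
    exact mul_nonneg (sq_nonneg α) (hp y hy).le
  have hode_rotated : ∀ y ∈ Icc x₁ x₂,
      HasDerivWithinAt (fun z => p z • ψ' z) (q y • ψ y) (Icc x₁ x₂) y := fun y hy => by
    have hderiv : sternMultiplier c * ((α : ℂ) ^ 2 * sternWeight (u y) (b y) c * ψ y) =
        q y • ψ y := by
      simp only [p, q, smul_eq_mul, Complex.ofReal_pow]
      ring
    exact (((hode y hy).const_mul (sternMultiplier c)).congr_deriv hderiv).congr
      (fun _ _ => mul_assoc _ _ _) (mul_assoc _ _ _)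
  exact eq_zero_of_sturm_of_re_pos (p := p) (q := q) hψ hode_rotated hp hq h₁ h₂

/-- Stern stability: under `|u| ≤ |b|` on `[−1,1]`, the Sturmian boundary value problem
`∂_y(ℋ ∂_yΨ) − α²ℋΨ = 0`, `Ψ(±1) = 0`, with `ℋ(y) = (u+b−c)(u−b−c)` and nonreal
spectral parameter `c`, has only the trivial solution. -/
theorem stern_stability (u b : ℝ → ℝ)
    (hu : ContinuousOn u (Icc (-1:ℝ) 1)) (hb : ContinuousOn b (Icc (-1:ℝ) 1))
    (hss : ∀ y ∈ Icc (-1:ℝ) 1, |u y| ≤ |b y|)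
    (α : ℝ) (c : ℂ) (hc : c.im ≠ 0)
    (Ψ : ℝ → ℂ)
    (hΨdiff : ∀ y ∈ Icc (-1:ℝ) 1, DifferentiableAt ℝ Ψ y)
    (hΨ'cont : ContinuousOn (deriv Ψ) (Icc (-1:ℝ) 1))
    (hode : ∀ y ∈ Icc (-1:ℝ) 1,
      HasDerivAt
        (fun z => (((u z + b z : ℝ) : ℂ) - c) * (((u z - b z : ℝ) : ℂ) - c) * deriv Ψ z)
        ((α : ℂ) ^ 2 * ((((u y + b y : ℝ) : ℂ) - c) * (((u y - b y : ℝ) : ℂ) - c)) * Ψ y) y)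
    (hbc₁ : Ψ (-1) = 0) (hbc₂ : Ψ 1 = 0) :
    ∀ y ∈ Icc (-1:ℝ) 1, Ψ y = 0 := by
  have hc_norm : 0 < ‖c‖ := norm_pos_iff.2 fun h => hc (by rw [h, Complex.zero_im])
  exact stern_stability_general α hc
    (fun y hy => (sq_le_sq.2 (hss y hy)).trans_lt (lt_add_of_pos_right _ (pow_pos hc_norm 2)))
    (fun y hy => (hΨdiff y hy).hasDerivAt.hasDerivWithinAt)
    (fun y hy => (hode y hy).hasDerivWithinAt) hbc₁ hbc₂
end

section
/- Suppose in addition that W₊ and W₋ are twice continuously differentiable on [a₋,a₊]. For c ∈ D₀ write σ₊(c) := W₊'(y_{c+})·(W₋(y_{c+}) − c) − W₋'(y_{c+})·(W₊(y_{c+}) − c) and σ₋(c) := W₊'(y_{c−})·(W₋(y_{c−}) − c) − W₋'(y_{c−})·(W₊(y_{c−}) − c) (these are real numbers). Then there exists a constant C > 0 such that |σ₊(c) − σ₋(c)| ≤ C·|c|·|σ₋(c)| for all c ∈ D₀; equivalently, |σ₊(c)/σ₋(c) − 1| ≤ C|c| for c ≠ 0. -/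
open Set

open Asymptotics Filter Topology

/-!
Along the branch `c = V y`, with `V` either of `W₊` and `W₋`, the symbol factors as `V' (W₋ - W₊)`.
Taylor expansion at `0`, where both profiles vanish, shows that on either branch it equals
`(W₋' 0 - W₊' 0) c` up to `O(c ^ 2)`, so any two symbols with the same value of `c` differ by
`O(c ^ 2)`. Since `V'` and `(W₋ - W₊)'` are bounded away from `0`, the symbol is at least of
order `c`, and the relative error is `O(c)`. All these `O` bounds are uniform on the interval (they
hold along `𝓟 s`): a Lipschitz bound for `W±'` at the point `0` extends from a neighborhood of `0`
to the whole interval because `W±'` is bounded.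
-/

theorem isTheta_one_principal {α E : Type*} [SeminormedAddCommGroup E] {f : α → E} {s : Set α}
    {κ K : ℝ} (hκ : 0 < κ) (hf : ∀ x ∈ s, ‖f x‖ ∈ Icc κ K) :
    f =Θ[𝓟 s] fun _ ↦ (1 : ℝ) := by
  refine ⟨isBigO_principal.2 ⟨K, fun x hx ↦ ?_⟩, isBigO_principal.2 ⟨κ⁻¹, fun x hx ↦ ?_⟩⟩
  · simpa using (hf x hx).2
  · rw [norm_one, ← inv_mul_cancel₀ hκ.ne']
    gcongr
    exact (hf x hx).1

theorem isBigO_sub_principal_of_nhdsWithin {E F : Type*} [SeminormedAddCommGroup E]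
    [SeminormedAddCommGroup F] {f : E → F} {s : Set E} {a : E}
    (hb : f =O[𝓟 s] fun _ ↦ (1 : ℝ)) (ha : (f · - f a) =O[𝓝[s] a] (· - a)) :
    (f · - f a) =O[𝓟 s] (· - a) := by
  obtain ⟨C, hC⟩ := ha.bound
  obtain ⟨δ, hδ, hball⟩ := Metric.mem_nhdsWithin_iff.1 hC
  have near : (f · - f a) =O[𝓟 (s ∩ Metric.ball a δ)] (· - a) :=
    isBigO_principal.2 ⟨C, fun x hx ↦ hball hx.symm⟩
  have bounded : (f · - f a) =O[𝓟 (s \ Metric.ball a δ)] fun _ ↦ (1 : ℝ) :=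
    (hb.mono (principal_mono.2 sdiff_subset)).sub (isBigO_const_const _ one_ne_zero _)
  have far : (fun _ ↦ (1 : ℝ)) =O[𝓟 (s \ Metric.ball a δ)] (· - a) := by
    refine isBigO_principal.2 ⟨δ⁻¹, fun x hx ↦ ?_⟩
    have hδx : δ ≤ ‖x - a‖ := by simpa [dist_eq_norm] using hx.2
    rw [norm_one, ← inv_mul_cancel₀ hδ.ne']
    gcongr
  simpa only [sup_principal, inter_union_sdiff] using near.sup (bounded.trans far)

section MeanValue

variable {s : Set ℝ} {a : ℝ} {f f' g g' : ℝ → ℝ}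

theorem exists_mapsTo_sub_eq_deriv_mul_sub (hs : Convex ℝ s) (ha : a ∈ s)
    (hf : ∀ x ∈ s, HasDerivWithinAt f (f' x) s x) :
    ∃ z : ℝ → ℝ, MapsTo z s s ∧
      ∀ x ∈ s, |z x - a| ≤ |x - a| ∧ f x - f a = f' (z x) * (x - a) := by
  have mean_value (x : ℝ) (hx : x ∈ s) :
      ∃ z ∈ s, |z - a| ≤ |x - a| ∧ f x - f a = f' z * (x - a) := by
    obtain ⟨z, hz, hfz⟩ := domain_mvt (fun y hy ↦ (hf y hy).hasFDerivWithinAt) hs ha hx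
    refine ⟨z, hs.segment_subset ha hx hz, ?_, by simpa [mul_comm] using hfz⟩
    exact abs_sub_left_of_mem_uIcc (segment_eq_uIcc a x ▸ hz)
  choose! z hzs hz using mean_value
  exact ⟨z, hzs, hz⟩

theorem isBigO_sub_of_deriv_isBigO_one (hs : Convex ℝ s) (ha : a ∈ s)
    (hf : ∀ x ∈ s, HasDerivWithinAt f (f' x) s x) (hf' : f' =O[𝓟 s] fun _ ↦ (1 : ℝ)) :
    (f · - f a) =O[𝓟 s] (· - a) := by
  obtain ⟨z, hzs, hz⟩ := exists_mapsTo_sub_eq_deriv_mul_sub hs ha hf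
  have hf'z : (f' ∘ z) =O[𝓟 s] fun _ ↦ (1 : ℝ) :=
    hf'.comp_tendsto (tendsto_principal_principal.2 hzs)
  refine (hf'z.mul (isBigO_refl (· - a) (𝓟 s))).congr' ?_ (.of_forall fun x ↦ one_mul _)
  exact eventually_principal.2 fun x hx ↦ (hz x hx).2.symm

theorem isBigO_sub_of_one_isBigO_deriv (hs : Convex ℝ s) (ha : a ∈ s)
    (hf : ∀ x ∈ s, HasDerivWithinAt f (f' x) s x) (hf' : (fun _ ↦ (1 : ℝ)) =O[𝓟 s] f') :
    (· - a) =O[𝓟 s] (f · - f a) := by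
  obtain ⟨z, hzs, hz⟩ := exists_mapsTo_sub_eq_deriv_mul_sub hs ha hf
  have hf'z : (fun _ ↦ (1 : ℝ)) =O[𝓟 s] (f' ∘ z) :=
    hf'.comp_tendsto (tendsto_principal_principal.2 hzs)
  refine (hf'z.mul (isBigO_refl (· - a) (𝓟 s))).congr' (.of_forall fun x ↦ one_mul _) ?_
  exact eventually_principal.2 fun x hx ↦ (hz x hx).2.symm

theorem isBigO_sub_sub_deriv_mul (hs : Convex ℝ s) (ha : a ∈ s)
    (hf : ∀ x ∈ s, HasDerivWithinAt f (f' x) s x) (hf' : (f' · - f' a) =O[𝓟 s] (· - a)) :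
    (fun x ↦ f x - f a - f' a * (x - a)) =O[𝓟 s] fun x ↦ (x - a) ^ 2 := by
  obtain ⟨z, hzs, hz⟩ := exists_mapsTo_sub_eq_deriv_mul_sub hs ha hf
  have hf'z : (fun x ↦ f' (z x) - f' a) =O[𝓟 s] (z · - a) :=
    hf'.comp_tendsto (tendsto_principal_principal.2 hzs)
  have hza : (z · - a) =O[𝓟 s] (· - a) :=
    isBigO_principal.2 ⟨1, fun x hx ↦ by simpa using (hz x hx).1⟩
  refine ((hf'z.trans hza).mul (isBigO_refl (· - a) (𝓟 s))).congr' ?_ ?_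
  · exact eventually_principal.2 fun x hx ↦ by linear_combination -(hz x hx).2
  · exact .of_forall fun x ↦ (sq (x - a)).symm

theorem isBigO_deriv_mul_sub_deriv_mul (hs : Convex ℝ s) (ha : a ∈ s)
    (hf : ∀ x ∈ s, HasDerivWithinAt f (f' x) s x) (hg : ∀ x ∈ s, HasDerivWithinAt g (g' x) s x)
    (hf' : (f' · - f' a) =O[𝓟 s] (· - a)) (hg' : (g' · - g' a) =O[𝓟 s] (· - a))
    (hg'_one : g' =O[𝓟 s] fun _ ↦ (1 : ℝ)) :
    (fun x ↦ f' x * (g x - g a) - g' a * (f x - f a)) =O[𝓟 s] fun x ↦ (x - a) ^ 2 := by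
  have hg_sub := isBigO_sub_of_deriv_isBigO_one hs ha hg hg'_one
  have hprod : (fun x ↦ (f' x - f' a) * (g x - g a)) =O[𝓟 s] fun x ↦ (x - a) ^ 2 := by
    simpa only [sq] using hf'.mul hg_sub
  have hf_taylor := (isBigO_sub_sub_deriv_mul hs ha hf hf').const_mul_left (g' a)
  have hg_taylor := (isBigO_sub_sub_deriv_mul hs ha hg hg').const_mul_left (f' a)
  exact ((hprod.add hg_taylor).sub hf_taylor).congr_left fun x ↦ by ring

end MeanValue

theorem isBigO_principal_graphOn {α β E F : Type*} [Norm E] [Norm F] {s : Set α} {f : α → β}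
    {u : α × β → E} {v : α × β → F} :
    u =O[𝓟 (s.graphOn f)] v ↔ (fun x ↦ u (x, f x)) =O[𝓟 s] fun x ↦ v (x, f x) := by
  simp only [isBigO_principal, graphOn, forall_mem_image]

theorem exists_abs_sub_le_of_isBigO {α : Type*} {T : Set (α × ℝ)} {σ : α × ℝ → ℝ} {d : ℝ}
    (hσ : (fun p ↦ σ p - d * p.2) =O[𝓟 T] fun p ↦ p.2 ^ 2)
    (hc : (fun p ↦ p.2) =O[𝓟 T] σ) :
    ∃ C > 0, ∀ c y₁ y₂, (y₁, c) ∈ T → (y₂, c) ∈ T →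
      |σ (y₁, c) - σ (y₂, c)| ≤ C * |c| * |σ (y₂, c)| := by
  obtain ⟨A, hA, hσA⟩ := hσ.exists_pos
  obtain ⟨B, hB, hcB⟩ := hc.exists_pos
  rw [isBigOWith_principal] at hσA hcB
  refine ⟨2 * A * B, by positivity, fun c y₁ y₂ h₁ h₂ ↦ ?_⟩
  have expansion {y : α} (hy : (y, c) ∈ T) : |σ (y, c) - d * c| ≤ A * c ^ 2 := by
    simpa using hσA _ hy
  calc |σ (y₁, c) - σ (y₂, c)|
      ≤ |σ (y₁, c) - d * c| + |d * c - σ (y₂, c)| := abs_sub_le _ _ _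
    _ ≤ A * c ^ 2 + A * c ^ 2 := by
      rw [abs_sub_comm (d * c)]
      exact add_le_add (expansion h₁) (expansion h₂)
    _ = 2 * A * |c| * |c| := by rw [← sq_abs c]; ring
    _ ≤ 2 * A * |c| * (B * |σ (y₂, c)|) := by gcongr; exact hcB _ h₂
    _ = 2 * A * B * |c| * |σ (y₂, c)| := by ring

/-- The symbol `σ` of the profiles `Wp`, `Wm`, with derivatives `Wp'`, `Wm'`, at a point `y` and a
level `c`; the paper's `σ±(c)` are its values at `y = y_{c±}`. -/
def profileSymbol (Wp Wm Wp' Wm' : ℝ → ℝ) (y c : ℝ) : ℝ :=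
  Wp' y * (Wm y - c) - Wm' y * (Wp y - c)

section ProfileSymbol

variable {s : Set ℝ} {Wp Wm Wp' Wm' : ℝ → ℝ}

theorem profileSymbol_left (y : ℝ) :
    profileSymbol Wp Wm Wp' Wm' y (Wp y) = Wp' y * (Wm y - Wp y) := by
  simp [profileSymbol]

theorem profileSymbol_right (y : ℝ) :
    profileSymbol Wp Wm Wp' Wm' y (Wm y) = Wm' y * (Wm y - Wp y) := by
  rw [profileSymbol]
  ring

theorem isBigO_profileSymbol_sub (hs : Convex ℝ s) (h0 : 0 ∈ s) (hWp0 : Wp 0 = 0) (hWm0 : Wm 0 = 0)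
    (hWp : ∀ y ∈ s, HasDerivWithinAt Wp (Wp' y) s y)
    (hWm : ∀ y ∈ s, HasDerivWithinAt Wm (Wm' y) s y)
    (hWp_one : (fun _ ↦ (1 : ℝ)) =O[𝓟 s] Wp') (hWm_one : (fun _ ↦ (1 : ℝ)) =O[𝓟 s] Wm')
    (hdiff_one : (fun y ↦ Wm' y - Wp' y) =O[𝓟 s] fun _ ↦ (1 : ℝ))
    (hWp' : (fun y ↦ Wp' y - Wp' 0) =O[𝓟 s] fun y ↦ y)
    (hWm' : (fun y ↦ Wm' y - Wm' 0) =O[𝓟 s] fun y ↦ y) :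
    (fun p : ℝ × ℝ ↦ profileSymbol Wp Wm Wp' Wm' p.1 p.2 - (Wm' 0 - Wp' 0) * p.2)
      =O[𝓟 (s.graphOn Wp ∪ s.graphOn Wm)] fun p ↦ p.2 ^ 2 := by
  have hdiff' : (fun y ↦ (Wm' y - Wp' y) - (Wm' 0 - Wp' 0)) =O[𝓟 s] fun y ↦ y :=
    (hWm'.sub hWp').congr_left fun y ↦ by ring
  have along_branch {V V' : ℝ → ℝ} (hV0 : V 0 = 0) (hV : ∀ y ∈ s, HasDerivWithinAt V (V' y) s y)
      (hV_one : (fun _ ↦ (1 : ℝ)) =O[𝓟 s] V') (hV' : (fun y ↦ V' y - V' 0) =O[𝓟 s] fun y ↦ y) :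
      (fun y ↦ V' y * (Wm y - Wp y) - (Wm' 0 - Wp' 0) * V y) =O[𝓟 s] fun y ↦ V y ^ 2 := by
    have hsq : (fun y ↦ y ^ 2) =O[𝓟 s] fun y ↦ V y ^ 2 := by
      simpa [hV0] using (isBigO_sub_of_one_isBigO_deriv hs h0 hV hV_one).pow 2
    refine .trans ?_ hsq
    simpa [hV0, hWp0, hWm0] using isBigO_deriv_mul_sub_deriv_mul hs h0 hV
      (fun y hy ↦ (hWm y hy).fun_sub (hWp y hy)) (by simpa using hV') (by simpa using hdiff')
      hdiff_one
  rw [← sup_principal, isBigO_sup, isBigO_principal_graphOn, isBigO_principal_graphOn]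
  simp only [profileSymbol_left, profileSymbol_right]
  exact ⟨along_branch hWp0 hWp hWp_one hWp', along_branch hWm0 hWm hWm_one hWm'⟩

theorem isBigO_snd_profileSymbol (hs : Convex ℝ s) (h0 : 0 ∈ s) (hWp0 : Wp 0 = 0) (hWm0 : Wm 0 = 0)
    (hWp : ∀ y ∈ s, HasDerivWithinAt Wp (Wp' y) s y)
    (hWm : ∀ y ∈ s, HasDerivWithinAt Wm (Wm' y) s y)
    (hWpΘ : Wp' =Θ[𝓟 s] fun _ ↦ (1 : ℝ)) (hWmΘ : Wm' =Θ[𝓟 s] fun _ ↦ (1 : ℝ))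
    (hdiff_one : (fun _ ↦ (1 : ℝ)) =O[𝓟 s] fun y ↦ Wm' y - Wp' y) :
    (fun p : ℝ × ℝ ↦ p.2) =O[𝓟 (s.graphOn Wp ∪ s.graphOn Wm)]
      fun p ↦ profileSymbol Wp Wm Wp' Wm' p.1 p.2 := by
  have hdiff : (fun y ↦ y) =O[𝓟 s] fun y ↦ Wm y - Wp y := by
    simpa [hWp0, hWm0] using isBigO_sub_of_one_isBigO_deriv hs h0
      (fun y hy ↦ (hWm y hy).fun_sub (hWp y hy)) hdiff_one
  have along_branch {V V' : ℝ → ℝ} (hV0 : V 0 = 0) (hV : ∀ y ∈ s, HasDerivWithinAt V (V' y) s y)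
      (hVΘ : V' =Θ[𝓟 s] fun _ ↦ (1 : ℝ)) : V =O[𝓟 s] fun y ↦ V' y * (Wm y - Wp y) := by
    have hV_id : V =O[𝓟 s] fun y ↦ y := by
      simpa [hV0] using isBigO_sub_of_deriv_isBigO_one hs h0 hV hVΘ.1
    exact hV_id.trans (by simpa using hVΘ.2.mul hdiff)
  rw [← sup_principal, isBigO_sup, isBigO_principal_graphOn, isBigO_principal_graphOn]
  simp only [profileSymbol_left, profileSymbol_right]
  exact ⟨along_branch hWp0 hWp hWpΘ, along_branch hWm0 hWm hWmΘ⟩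

end ProfileSymbol

theorem sigma_ratio_close_to_one_general {s : Set ℝ} (hs : Convex ℝ s) (h0 : 0 ∈ s)
    {κ K : ℝ} (hκ : 0 < κ) {Wp Wm Wp' Wm' : ℝ → ℝ} (hWp0 : Wp 0 = 0) (hWm0 : Wm 0 = 0)
    (hWp : ∀ y ∈ s, HasDerivWithinAt Wp (Wp' y) s y)
    (hWm : ∀ y ∈ s, HasDerivWithinAt Wm (Wm' y) s y)
    (hWp' : (fun y ↦ Wp' y - Wp' 0) =O[𝓝[s] 0] fun y ↦ y)
    (hWm' : (fun y ↦ Wm' y - Wm' 0) =O[𝓝[s] 0] fun y ↦ y)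
    (hWp'b : ∀ y ∈ s, Wp' y ∈ Icc κ K) (hWm'b : ∀ y ∈ s, Wm' y ∈ Icc (-K) (-κ)) :
    ∃ C > 0, ∀ c, ∀ y₁ ∈ s, ∀ y₂ ∈ s, (Wp y₁ = c ∨ Wm y₁ = c) → (Wp y₂ = c ∨ Wm y₂ = c) →
      |profileSymbol Wp Wm Wp' Wm' y₁ c - profileSymbol Wp Wm Wp' Wm' y₂ c| ≤
        C * |c| * |profileSymbol Wp Wm Wp' Wm' y₂ c| := by
  have hWpΘ : Wp' =Θ[𝓟 s] fun _ ↦ (1 : ℝ) := isTheta_one_principal (K := K) hκ fun y hy ↦ by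
    grind [Real.norm_eq_abs]
  have hWmΘ : Wm' =Θ[𝓟 s] fun _ ↦ (1 : ℝ) := isTheta_one_principal (K := K) hκ fun y hy ↦ by
    grind [Real.norm_eq_abs]
  have hdiffΘ : (fun y ↦ Wm' y - Wp' y) =Θ[𝓟 s] fun _ ↦ (1 : ℝ) :=
    isTheta_one_principal (K := 2 * K) (mul_pos two_pos hκ) fun y hy ↦ by
      grind [Real.norm_eq_abs]
  have hWp's : (fun y ↦ Wp' y - Wp' 0) =O[𝓟 s] fun y ↦ y := by
    simpa using isBigO_sub_principal_of_nhdsWithin (a := 0) hWpΘ.1 (by simpa using hWp')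
  have hWm's : (fun y ↦ Wm' y - Wm' 0) =O[𝓟 s] fun y ↦ y := by
    simpa using isBigO_sub_principal_of_nhdsWithin (a := 0) hWmΘ.1 (by simpa using hWm')
  obtain ⟨C, hC, hle⟩ := exists_abs_sub_le_of_isBigO
    (isBigO_profileSymbol_sub hs h0 hWp0 hWm0 hWp hWm hWpΘ.2 hWmΘ.2 hdiffΘ.1 hWp's hWm's)
    (isBigO_snd_profileSymbol hs h0 hWp0 hWm0 hWp hWm hWpΘ hWmΘ hdiffΘ.2)
  exact ⟨C, hC, fun c y₁ hy₁ y₂ hy₂ h₁ h₂ ↦ hle c y₁ y₂ (by simp [hy₁, h₁]) (by simp [hy₂, h₂])⟩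

/-- Comparison of the symbols `σ₊` and `σ₋`: for `C²` profiles,
`|σ₊(c) − σ₋(c)| ≤ C|c||σ₋(c)|`, i.e. `|σ₊(c)/σ₋(c) − 1| ≤ C|c|`. -/
theorem sigma_ratio_close_to_one (am ap κ K : ℝ) (ham : am < 0) (hap : 0 < ap)
    (hκ : 0 < κ) (hκK : κ ≤ K)
    (Wp Wm Wp' Wm' Wp'' Wm'' : ℝ → ℝ)
    (hWp0 : Wp 0 = 0) (hWm0 : Wm 0 = 0)
    (hWp : ∀ y ∈ Icc am ap, HasDerivAt Wp (Wp' y) y)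
    (hWm : ∀ y ∈ Icc am ap, HasDerivAt Wm (Wm' y) y)
    (hWp' : ∀ y ∈ Icc am ap, HasDerivAt Wp' (Wp'' y) y)
    (hWm' : ∀ y ∈ Icc am ap, HasDerivAt Wm' (Wm'' y) y)
    (hWp''c : ContinuousOn Wp'' (Icc am ap)) (hWm''c : ContinuousOn Wm'' (Icc am ap))
    (hWp'b : ∀ y ∈ Icc am ap, Wp' y ∈ Icc κ K)
    (hWm'b : ∀ y ∈ Icc am ap, Wm' y ∈ Icc (-K) (-κ))
    (ycp ycm : ℝ → ℝ)
    (hycp : ∀ c ∈ Icc (max (Wm ap) (Wp am)) (min (Wp ap) (Wm am)),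
      ycp c ∈ Icc (0:ℝ) ap ∧ (0 ≤ c → Wp (ycp c) = c) ∧ (c ≤ 0 → Wm (ycp c) = c))
    (hycm : ∀ c ∈ Icc (max (Wm ap) (Wp am)) (min (Wp ap) (Wm am)),
      ycm c ∈ Icc am (0:ℝ) ∧ (0 ≤ c → Wm (ycm c) = c) ∧ (c ≤ 0 → Wp (ycm c) = c)) :
    ∃ C > 0, ∀ c ∈ Icc (max (Wm ap) (Wp am)) (min (Wp ap) (Wm am)),
      |(Wp' (ycp c) * (Wm (ycp c) - c) - Wm' (ycp c) * (Wp (ycp c) - c))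
          - (Wp' (ycm c) * (Wm (ycm c) - c) - Wm' (ycm c) * (Wp (ycm c) - c))| ≤
        C * |c| * |Wp' (ycm c) * (Wm (ycm c) - c) - Wm' (ycm c) * (Wp (ycm c) - c)| := by
  have h0 : (0 : ℝ) ∈ Icc am ap := ⟨ham.le, hap.le⟩
  obtain ⟨C, hC, hle⟩ := sigma_ratio_close_to_one_general (convex_Icc am ap) h0 hκ hWp0 hWm0
    (fun y hy ↦ (hWp y hy).hasDerivWithinAt) (fun y hy ↦ (hWm y hy).hasDerivWithinAt)
    (by simpa using (hWp' 0 h0).hasDerivWithinAt.hasFDerivWithinAt.isBigO_sub)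
    (by simpa using (hWm' 0 h0).hasDerivWithinAt.hasFDerivWithinAt.isBigO_sub) hWp'b hWm'b
  refine ⟨C, hC, fun c hc ↦ ?_⟩
  obtain ⟨hp, hp_nonneg, hp_nonpos⟩ := hycp c hc
  obtain ⟨hm, hm_nonneg, hm_nonpos⟩ := hycm c hc
  exact hle c _ ⟨ham.le.trans hp.1, hp.2⟩ _ ⟨hm.1, hm.2.trans hap.le⟩
    ((le_total 0 c).imp hp_nonneg hp_nonpos) ((le_total 0 c).symm.imp hm_nonpos hm_nonneg)
end

section
/- For every c ∈ ℂ with Im c ≠ 0, one has ∫₀¹ ( W₊'(y)/(W₊(y) − c) − W₋'(y)/(W₋(y) − c) ) dy = Log( (W₊(1) − c)/(W₋(1) − c) ), where Log denotes the principal branch of the complex logarithm. -/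
/-!
For nonreal `c` the points `W₊(y) - c` and `W₋(y) - c` lie in the same open half-plane, so their
quotient never meets the branch cut `(-∞, 0]`. Hence the principal logarithm of the quotient is a
primitive of the integrand, and it vanishes at `y = 0`, where the quotient is `1`.
-/

open Set

open MeasureTheory (Measure volume)

theorem div_mem_slitPlane_of_im_mul_im_pos {z w : ℂ} (h : 0 < z.im * w.im) :
    z / w ∈ Complex.slitPlane := by
  have hw : w ≠ 0 := by
    rintro rfl
    simp at h
  rw [Complex.mem_slitPlane_iff_not_le_zero, Complex.nonpos_iff]
  rintro ⟨hre, him⟩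
  have hz : z.im = (z / w).re * w.im := by
    simpa [him] using congrArg Complex.im (div_mul_cancel₀ z hw).symm
  have hle : z.im * w.im ≤ 0 := by
    rw [hz, mul_assoc]
    exact mul_nonpos_of_nonpos_of_nonneg hre (mul_self_nonneg _)
  exact hle.not_gt h

theorem hasDerivWithinAt_log_div {f g : ℝ → ℂ} {f' g' : ℂ} {s : Set ℝ} {y : ℝ}
    (hf : HasDerivWithinAt f f' s y) (hg : HasDerivWithinAt g g' s y)
    (h : f y / g y ∈ Complex.slitPlane) :
    HasDerivWithinAt (fun t ↦ Complex.log (f t / g t)) (f' / f y - g' / g y) s y := by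
  obtain ⟨hf₀, hg₀⟩ := div_ne_zero_iff.mp (Complex.slitPlane_ne_zero h)
  refine ((hf.fun_div hg hg₀).clog_real h).congr_deriv ?_
  field_simp

theorem intervalIntegrable_div_of_continuousOn {𝕜 : Type*} [NormedField 𝕜] {f g : ℝ → 𝕜}
    {μ : Measure ℝ} {a b : ℝ} (hf : IntervalIntegrable f μ a b)
    (hg : ContinuousOn g (uIcc a b)) (hg₀ : ∀ y ∈ uIcc a b, g y ≠ 0) :
    IntervalIntegrable (fun y ↦ f y / g y) μ a b := by
  simpa only [div_eq_mul_inv] using hf.mul_continuousOn (hg.fun_inv₀ hg₀)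

theorem integral_div_sub_div_eq_log_div_sub_log_div {f g f' g' : ℝ → ℂ} {a b : ℝ}
    (hf : ∀ y ∈ uIcc a b, HasDerivWithinAt f (f' y) (uIcc a b) y)
    (hg : ∀ y ∈ uIcc a b, HasDerivWithinAt g (g' y) (uIcc a b) y)
    (hf' : IntervalIntegrable f' volume a b)
    (hg' : IntervalIntegrable g' volume a b)
    (h : ∀ y ∈ uIcc a b, f y / g y ∈ Complex.slitPlane) :
    ∫ y in a..b, (f' y / f y - g' y / g y) =
      Complex.log (f b / g b) - Complex.log (f a / g a) := by
  have hderiv : ∀ y ∈ uIcc a b, HasDerivWithinAt (fun t ↦ Complex.log (f t / g t))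
      (f' y / f y - g' y / g y) (uIcc a b) y :=
    fun y hy ↦ hasDerivWithinAt_log_div (hf y hy) (hg y hy) (h y hy)
  have hne : ∀ y ∈ uIcc a b, f y ≠ 0 ∧ g y ≠ 0 :=
    fun y hy ↦ div_ne_zero_iff.mp (Complex.slitPlane_ne_zero (h y hy))
  have hint : IntervalIntegrable (fun y ↦ f' y / f y - g' y / g y) volume a b :=
    (intervalIntegrable_div_of_continuousOn hf' (HasDerivWithinAt.continuousOn hf)
      fun y hy ↦ (hne y hy).1).sub
    (intervalIntegrable_div_of_continuousOn hg' (HasDerivWithinAt.continuousOn hg)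
      fun y hy ↦ (hne y hy).2)
  refine intervalIntegral.integral_eq_sub_of_hasDeriv_right
    (HasDerivWithinAt.continuousOn hderiv) (fun y hy ↦ ?_) hint
  exact ((hderiv y (Ioo_subset_Icc_self hy)).hasDerivAt
    (Icc_mem_nhds hy.1 hy.2)).hasDerivWithinAt

theorem log_integral_identity_general {f g f' g' : ℝ → ℝ} {a b : ℝ} (hfg : f a = g a)
    (hf : ∀ y ∈ uIcc a b, HasDerivWithinAt f (f' y) (uIcc a b) y)
    (hg : ∀ y ∈ uIcc a b, HasDerivWithinAt g (g' y) (uIcc a b) y)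
    (hf' : IntervalIntegrable f' volume a b)
    (hg' : IntervalIntegrable g' volume a b) {c : ℂ} (hc : c.im ≠ 0) :
    ∫ y in a..b, ((f' y : ℂ) / ((f y : ℂ) - c) - (g' y : ℂ) / ((g y : ℂ) - c)) =
      Complex.log (((f b : ℂ) - c) / ((g b : ℂ) - c)) := by
  have hslit : ∀ u v : ℝ, ((u : ℂ) - c) / ((v : ℂ) - c) ∈ Complex.slitPlane := fun u v ↦
    div_mem_slitPlane_of_im_mul_im_pos (by simpa using mul_self_pos.mpr hc)
  have hone : ((f a : ℂ) - c) / ((g a : ℂ) - c) = 1 := by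
    rw [hfg]
    exact div_self (div_ne_zero_iff.mp (Complex.slitPlane_ne_zero (hslit (g a) (g a)))).1
  have hftc := integral_div_sub_div_eq_log_div_sub_log_div
    (fun y hy ↦ (hf y hy).ofReal_comp.sub_const c) (fun y hy ↦ (hg y hy).ofReal_comp.sub_const c)
    ⟨hf'.1.ofReal, hf'.2.ofReal⟩ ⟨hg'.1.ofReal, hg'.2.ofReal⟩ (fun y _ ↦ hslit (f y) (g y))
  rwa [hone, Complex.log_one, sub_zero] at hftc

/-- The explicit logarithmic integral: for nonreal `c`,
`∫₀¹ (W₊'/(W₊−c) − W₋'/(W₋−c)) dy = Log((W₊(1)−c)/(W₋(1)−c))` (principal branch). -/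
theorem log_integral_identity (Wp Wm Wp' Wm' : ℝ → ℝ)
    (hWp0 : Wp 0 = 0) (hWm0 : Wm 0 = 0)
    (hWp : ∀ y ∈ Icc (0:ℝ) 1, HasDerivAt Wp (Wp' y) y)
    (hWm : ∀ y ∈ Icc (0:ℝ) 1, HasDerivAt Wm (Wm' y) y)
    (hWp'c : ContinuousOn Wp' (Icc (0:ℝ) 1)) (hWm'c : ContinuousOn Wm' (Icc (0:ℝ) 1))
    (hWp'pos : ∀ y ∈ Icc (0:ℝ) 1, 0 < Wp' y)
    (hWm'neg : ∀ y ∈ Icc (0:ℝ) 1, Wm' y < 0)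
    (c : ℂ) (hc : c.im ≠ 0) :
    (∫ y in (0:ℝ)..1,
        ((Wp' y : ℂ) / ((Wp y : ℂ) - c) - (Wm' y : ℂ) / ((Wm y : ℂ) - c)))
      = Complex.log (((Wp 1 : ℂ) - c) / ((Wm 1 : ℂ) - c)) := by
  rw [← uIcc_of_le zero_le_one] at hWp hWm hWp'c hWm'c
  exact log_integral_identity_general (hWp0.trans hWm0.symm)
    (fun y hy ↦ (hWp y hy).hasDerivWithinAt) (fun y hy ↦ (hWm y hy).hasDerivWithinAt)
    hWp'c.intervalIntegrable hWm'c.intervalIntegrable hc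
end

section
/- Let p, a, b, I₊, I₋, s₊, s₋ be real numbers with s₊ ≠ 0 and s₋ ≠ 0. Then ( p·I₊·I₋ − π²p/(s₊s₋) − a·I₊ − b·I₋ )² + ( πp·I₊/s₋ + πp·I₋/s₊ − πa/s₊ − πb/s₋ )² = ( p·I₊·I₋ − a·I₊ − b·I₋ )² + (π/s₋)²·( p·I₊ − b )² + (π/s₊)²·( p·I₋ − a )² + π⁴p²/(s₊s₋)² + 2π²ab/(s₊s₋). In particular, if s₊s₋ > 0 and a > 0, b > 0, then the left-hand side is at least 2π²ab/(s₊s₋) > 0. -/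
open Real

/-!
The real and imaginary parts of `𝒟` are those of `p z w - a z - b w`, where `z = x + i u` and
`w = y + i v` stand for `I₊ + i π/s₊` and `I₋ + i π/s₋`. With `A = p x y - a x - b y` they read
`A - p u v` and `v (p x - b) + u (p y - a)`. Since `(p x - b) (p y - a) = p A + a b`, the cross
terms `-2 p u v A` and `2 u v (p x - b) (p y - a)` of the two squares add up to `2 a b u v`.
-/

theorem wronskian_re_sq_add_im_sq {R : Type*} [CommRing R] (p a b x y u v : R) :
    (p * x * y - p * u * v - a * x - b * y) ^ 2 + (p * x * v + p * y * u - a * u - b * v) ^ 2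
      = (p * x * y - a * x - b * y) ^ 2 + v ^ 2 * (p * x - b) ^ 2 + u ^ 2 * (p * y - a) ^ 2
        + (p * u * v) ^ 2 + 2 * a * b * u * v := by
  have factor_mul_factor :
      (p * x - b) * (p * y - a) = p * (p * x * y - a * x - b * y) + a * b := by ring
  linear_combination 2 * u * v * factor_mul_factor

theorem two_mul_mul_le_wronskian_re_sq_add_im_sq {R : Type*} [CommRing R] [LinearOrder R]
    [IsOrderedRing R] (p a b x y u v : R) :
    2 * a * b * u * v ≤
      (p * x * y - p * u * v - a * x - b * y) ^ 2
        + (p * x * v + p * y * u - a * u - b * v) ^ 2 := by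
  rw [wronskian_re_sq_add_im_sq]
  exact le_add_of_nonneg_left (by apply_rules [add_nonneg, mul_nonneg, sq_nonneg])

/-- The algebraic identity underlying the positivity of the boundary value of the
Wronskian `𝒟`: with `p = c²P(c)`, `a = φ₊(0,c)²`, `b = φ₋(0,c)²`, `I± = I±^{re}(c)`,
`s± = σ±(c)`, the squared modulus `𝒟^{re}(c)² + 𝒟^{im}(c)²` recombines into a sum of
squares plus `π⁴p²/(s₊s₋)² + 2π²ab/(s₊s₋)`; in particular it is strictly positive when
`s₊s₋ > 0` and `a, b > 0`. -/
theorem wronskian_modulus_identity (p a b Ip Im sp sm : ℝ)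
    (hsp : sp ≠ 0) (hsm : sm ≠ 0) :
    ((p * Ip * Im - π ^ 2 * p / (sp * sm) - a * Ip - b * Im) ^ 2
        + (π * p * Ip / sm + π * p * Im / sp - π * a / sp - π * b / sm) ^ 2
      = (p * Ip * Im - a * Ip - b * Im) ^ 2
        + (π / sm) ^ 2 * (p * Ip - b) ^ 2 + (π / sp) ^ 2 * (p * Im - a) ^ 2
        + π ^ 4 * p ^ 2 / (sp * sm) ^ 2 + 2 * π ^ 2 * a * b / (sp * sm)) ∧
    (0 < sp * sm → 0 < a → 0 < b →
      2 * π ^ 2 * a * b / (sp * sm) ≤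
          (p * Ip * Im - π ^ 2 * p / (sp * sm) - a * Ip - b * Im) ^ 2
            + (π * p * Ip / sm + π * p * Im / sp - π * a / sp - π * b / sm) ^ 2 ∧
        0 < 2 * π ^ 2 * a * b / (sp * sm)) := by
  refine ⟨?identity, fun hs ha hb ↦ ⟨?lower_bound, ?positive⟩⟩
  case identity =>
    linear_combination wronskian_re_sq_add_im_sq p a b Ip Im (π / sp) (π / sm)
  case lower_bound =>
    linear_combination two_mul_mul_le_wronskian_re_sq_add_im_sq p a b Ip Im (π / sp) (π / sm)
  case positive =>
    exact div_pos (by positivity) hs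
end

section
/- Let u, b : ℝ → ℝ be continuous on [−1,1] with |u(y)| ≤ |b(y)| for all y ∈ [−1,1], let α ∈ ℝ, let c ∈ ℂ with Im c ≠ 0, set H(y) := (u(y) + b(y) − c)(u(y) − b(y) − c), and let F : [−1,1] → ℂ. If Θ₁ and Θ₂ are both continuously differentiable functions from [−1,1] to ℂ such that y ↦ H(y)·Θᵢ'(y) is differentiable on [−1,1] with (HΘᵢ')'(y) − α²H(y)Θᵢ(y) = F(y) for all y ∈ [−1,1], and Θᵢ(−1) = Θᵢ(1) = 0 for i = 1, 2, then Θ₁(y) = Θ₂(y) for all y ∈ [−1,1]. -/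
open Set

/-!
The difference `Θ` of two solutions solves the homogeneous problem `(p Θ')' = q Θ`, `Θ(±1) = 0`.
If a constant `ω` makes `re (ω p) > 0` and `re (ω q) ≥ 0`, then `re (ω ⟪Θ, p Θ'⟫)`, which vanishes
at both endpoints, has derivative `re (ω q) ‖Θ‖² + re (ω p) ‖Θ'‖² ≥ 0`; so this derivative is
zero, `Θ' = 0`, and `Θ = 0`. For `p = ℋ` and `q = α² ℋ`, expand `ℋ = c² - 2uc + u² - b²`:
multiplication by `conj c` makes the cross term real, leaving
`im (conj c * ℋ) = im c * (|c|² + b² - u²)`. Under `|u| ≤ |b|` this has the strict sign of `im c`,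
so `ω = -i (im c) (conj c)` is such a constant.
-/

open scoped ComplexConjugate InnerProductSpace

theorem eq_zero_of_hasDerivAt_nonneg_of_endpoints_eq {f f' : ℝ → ℝ} {l r : ℝ}
    (hf : ContinuousOn f (Icc l r)) (hf' : ∀ y ∈ Ioo l r, HasDerivAt f (f' y) y)
    (hnonneg : ∀ y ∈ Ioo l r, 0 ≤ f' y) (hlr : f l = f r) :
    ∀ y ∈ Ioo l r, f' y = 0 := by
  intro y hy
  have hle : l ≤ r := (hy.1.trans hy.2).le
  have hmono : MonotoneOn f (Icc l r) := by
    refine monotoneOn_of_hasDerivWithinAt_nonneg (f' := f') (convex_Icc l r) hf ?_ ?_ <;>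
      rw [interior_Icc]
    · exact fun z hz => (hf' z hz).hasDerivWithinAt
    · exact hnonneg
  have hconst : ∀ z ∈ Ioo l r, f z = f l := fun z hz =>
    have hz' := Ioo_subset_Icc_self hz
    le_antisymm ((hmono hz' (right_mem_Icc.2 hle) hz'.2).trans_eq hlr.symm)
      (hmono (left_mem_Icc.2 hle) hz' hz'.1)
  have hlocal : f =ᶠ[nhds y] fun _ => f l :=
    Filter.eventually_of_mem (Ioo_mem_nhds hy.1 hy.2) hconst
  exact (hf' y hy).unique ((hasDerivAt_const y (f l)).congr_of_eventuallyEq hlocal)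

theorem eqOn_left_endpoint_of_hasDerivAt_zero {E : Type*} [NormedAddCommGroup E] [NormedSpace ℝ E]
    {f : ℝ → E} {l r : ℝ} (hf : ContinuousOn f (Icc l r))
    (hf' : ∀ y ∈ Ioo l r, HasDerivAt f 0 y) : EqOn f (fun _ => f l) (Icc l r) := by
  rcases lt_or_ge l r with hlr | hrl
  · obtain ⟨k, hk⟩ := isOpen_Ioo.exists_is_const_of_deriv_eq_zero isPreconnected_Ioo
      (fun y hy => (hf' y hy).differentiableAt.differentiableWithinAt)
      (fun y hy => (hf' y hy).deriv)
    have hconst : EqOn f (fun _ => k) (Icc l r) :=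
      EqOn.of_subset_closure hk hf continuousOn_const Ioo_subset_Icc_self (closure_Ioo hlr.ne).ge
    exact fun y hy => (hconst hy).trans (hconst (left_mem_Icc.2 hlr.le)).symm
  · exact fun y hy => congrArg f (le_antisymm (hy.2.trans hrl) hy.1)

section Solutions

variable {𝕜 E : Type*} [Semiring 𝕜] [NormedAddCommGroup E] [NormedSpace ℝ E] [Module 𝕜 E]

/-- `Θ`, with derivative `Θ'`, solves the Dirichlet problem `(p Θ')' = q Θ + F`, `Θ l = Θ r = 0`.
The derivatives are required in the open interval only; at the endpoints, `Θ` and the flux `p Θ'`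
have to be continuous from inside. -/
structure IsSturmDirichletSolution (p q : ℝ → 𝕜) (F : ℝ → E) (l r : ℝ) (Θ Θ' : ℝ → E) :
    Prop where
  continuousOn : ContinuousOn Θ (Icc l r)
  hasDerivAt : ∀ y ∈ Ioo l r, HasDerivAt Θ (Θ' y) y
  continuousOn_flux : ContinuousOn (fun y => p y • Θ' y) (Icc l r)
  hasDerivAt_flux : ∀ y ∈ Ioo l r, HasDerivAt (fun z => p z • Θ' z) (q y • Θ y + F y) y
  left_eq_zero : Θ l = 0
  right_eq_zero : Θ r = 0

namespace IsSturmDirichletSolution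

variable {p q : ℝ → 𝕜} {F F₁ F₂ Θ Θ' Θ₁ Θ₁' Θ₂ Θ₂' : ℝ → E} {l r : ℝ}

theorem of_hasDerivAt_Icc (hΘ : ∀ y ∈ Icc l r, HasDerivAt Θ (Θ' y) y)
    (hflux : ∀ y ∈ Icc l r, HasDerivAt (fun z => p z • Θ' z) (q y • Θ y + F y) y)
    (hl : Θ l = 0) (hr : Θ r = 0) : IsSturmDirichletSolution p q F l r Θ Θ' where
  continuousOn := HasDerivAt.continuousOn hΘ
  hasDerivAt y hy := hΘ y (Ioo_subset_Icc_self hy)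
  continuousOn_flux := HasDerivAt.continuousOn hflux
  hasDerivAt_flux y hy := hflux y (Ioo_subset_Icc_self hy)
  left_eq_zero := hl
  right_eq_zero := hr

theorem sub (h₁ : IsSturmDirichletSolution p q F₁ l r Θ₁ Θ₁')
    (h₂ : IsSturmDirichletSolution p q F₂ l r Θ₂ Θ₂') :
    IsSturmDirichletSolution p q (F₁ - F₂) l r (Θ₁ - Θ₂) (Θ₁' - Θ₂') where
  continuousOn := h₁.continuousOn.sub h₂.continuousOn
  hasDerivAt y hy := (h₁.hasDerivAt y hy).sub (h₂.hasDerivAt y hy)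
  continuousOn_flux := by
    simpa only [Pi.sub_def, smul_sub] using h₁.continuousOn_flux.sub h₂.continuousOn_flux
  hasDerivAt_flux y hy := by
    simpa only [Pi.sub_def, smul_sub, add_sub_add_comm] using
      (h₁.hasDerivAt_flux y hy).sub (h₂.hasDerivAt_flux y hy)
  left_eq_zero := by simp [h₁.left_eq_zero, h₂.left_eq_zero]
  right_eq_zero := by simp [h₁.right_eq_zero, h₂.right_eq_zero]

end IsSturmDirichletSolution

end Solutions

section EnergyMethod

variable {𝕜 E : Type*} [RCLike 𝕜] [NormedAddCommGroup E] [InnerProductSpace 𝕜 E] [NormedSpace ℝ E]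

namespace IsSturmDirichletSolution

variable {p q : ℝ → 𝕜} {F Θ Θ' Θ₁ Θ₁' Θ₂ Θ₂' : ℝ → E} {l r : ℝ}

theorem hasDerivAt_re_mul_inner_flux (h : IsSturmDirichletSolution p q 0 l r Θ Θ') (ω : 𝕜)
    {y : ℝ} (hy : y ∈ Ioo l r) :
    HasDerivAt (fun z => RCLike.re (ω * ⟪Θ z, p z • Θ' z⟫_𝕜))
      (RCLike.re (ω * q y) * ‖Θ y‖ ^ 2 + RCLike.re (ω * p y) * ‖Θ' y‖ ^ 2) y := by
  have hinner := ((h.hasDerivAt y hy).inner 𝕜 (h.hasDerivAt_flux y hy)).const_mul ω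
  refine (RCLike.reCLM.hasFDerivAt.comp_hasDerivAt y hinner).congr_deriv ?_
  simp only [Pi.zero_apply, add_zero, inner_smul_right, inner_self_eq_norm_sq_to_K,
    RCLike.reCLM_apply, mul_add, map_add, ← mul_assoc, ← RCLike.ofReal_pow, RCLike.re_mul_ofReal]

variable {ω : 𝕜}

theorem deriv_eq_zero (h : IsSturmDirichletSolution p q 0 l r Θ Θ')
    (hp : ∀ y ∈ Ioo l r, 0 < RCLike.re (ω * p y)) (hq : ∀ y ∈ Ioo l r, 0 ≤ RCLike.re (ω * q y)) :
    ∀ y ∈ Ioo l r, Θ' y = 0 := by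
  intro y hy
  have hqΘ : ∀ z ∈ Ioo l r, 0 ≤ RCLike.re (ω * q z) * ‖Θ z‖ ^ 2 := fun z hz =>
    mul_nonneg (hq z hz) (sq_nonneg _)
  have hpΘ' : ∀ z ∈ Ioo l r, 0 ≤ RCLike.re (ω * p z) * ‖Θ' z‖ ^ 2 := fun z hz =>
    mul_nonneg (hp z hz).le (sq_nonneg _)
  have hcont : ContinuousOn (fun z => RCLike.re (ω * ⟪Θ z, p z • Θ' z⟫_𝕜)) (Icc l r) :=
    RCLike.continuous_re.comp_continuousOn
      (continuousOn_const.mul (h.continuousOn.inner h.continuousOn_flux))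
  have hsum := eq_zero_of_hasDerivAt_nonneg_of_endpoints_eq hcont
    (fun z hz => h.hasDerivAt_re_mul_inner_flux ω hz)
    (fun z hz => add_nonneg (hqΘ z hz) (hpΘ' z hz))
    (by simp only [h.left_eq_zero, h.right_eq_zero, inner_zero_left]) y hy
  have hprod := ((add_eq_zero_iff_of_nonneg (hqΘ y hy) (hpΘ' y hy)).1 hsum).2
  simpa only [mul_eq_zero, (hp y hy).ne', false_or, sq_eq_zero_iff, norm_eq_zero] using hprod

theorem eqOn_zero (h : IsSturmDirichletSolution p q 0 l r Θ Θ')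
    (hp : ∀ y ∈ Ioo l r, 0 < RCLike.re (ω * p y)) (hq : ∀ y ∈ Ioo l r, 0 ≤ RCLike.re (ω * q y)) :
    EqOn Θ 0 (Icc l r) := fun y hy => by
  have hΘ : ∀ z ∈ Ioo l r, HasDerivAt Θ 0 z := fun z hz =>
    h.deriv_eq_zero hp hq z hz ▸ h.hasDerivAt z hz
  rw [eqOn_left_endpoint_of_hasDerivAt_zero h.continuousOn hΘ hy, h.left_eq_zero, Pi.zero_apply]

theorem eqOn (h₁ : IsSturmDirichletSolution p q F l r Θ₁ Θ₁')
    (h₂ : IsSturmDirichletSolution p q F l r Θ₂ Θ₂')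
    (hp : ∀ y ∈ Ioo l r, 0 < RCLike.re (ω * p y)) (hq : ∀ y ∈ Ioo l r, 0 ≤ RCLike.re (ω * q y)) :
    EqOn Θ₁ Θ₂ (Icc l r) := by
  have hsub := h₁.sub h₂
  rw [sub_self] at hsub
  exact fun y hy => sub_eq_zero.1 (hsub.eqOn_zero hp hq hy)

end IsSturmDirichletSolution

end EnergyMethod

/-- The weight `ℋ = (u + b - c) (u - b - c)` of the Sturmian equation. -/
def sturmianWeight (u b : ℝ → ℝ) (c : ℂ) (y : ℝ) : ℂ :=
  (((u y + b y : ℝ) : ℂ) - c) * (((u y - b y : ℝ) : ℂ) - c)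

theorem im_conj_mul_sturmianWeight (u b : ℝ → ℝ) (c : ℂ) (y : ℝ) :
    (conj c * sturmianWeight u b c y).im = c.im * (‖c‖ ^ 2 + b y ^ 2 - u y ^ 2) := by
  rw [Complex.sq_norm, Complex.normSq_apply]
  simp only [sturmianWeight, Complex.mul_im, Complex.mul_re, Complex.sub_re, Complex.sub_im,
    Complex.ofReal_re, Complex.ofReal_im, Complex.conj_re, Complex.conj_im]
  ring

theorem re_mul_sturmianWeight_pos {u b : ℝ → ℝ} {c : ℂ} {y : ℝ} (hc : c.im ≠ 0)
    (hub : u y ^ 2 < ‖c‖ ^ 2 + b y ^ 2) :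
    0 < (-(Complex.I * c.im * conj c) * sturmianWeight u b c y).re := by
  calc 0 < c.im ^ 2 * (‖c‖ ^ 2 + b y ^ 2 - u y ^ 2) :=
        mul_pos (sq_pos_of_ne_zero hc) (sub_pos.2 hub)
    _ = c.im * (conj c * sturmianWeight u b c y).im := by rw [im_conj_mul_sturmianWeight]; ring
    _ = (-(Complex.I * c.im * conj c) * sturmianWeight u b c y).re := by
        rw [neg_mul, mul_assoc, mul_assoc, Complex.neg_re, Complex.I_mul_re, neg_neg,
          Complex.im_ofReal_mul]

theorem inhomogeneous_sturmian_unique_general {E : Type*} [NormedAddCommGroup E]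
    [InnerProductSpace ℂ E] [NormedSpace ℝ E] {u b α : ℝ → ℝ} {c : ℂ} {l r : ℝ}
    {F Θ₁ Θ₁' Θ₂ Θ₂' : ℝ → E} (hc : c.im ≠ 0)
    (hub : ∀ y ∈ Ioo l r, u y ^ 2 < ‖c‖ ^ 2 + b y ^ 2)
    (h₁ : IsSturmDirichletSolution (sturmianWeight u b c)
      (fun y => (α y : ℂ) ^ 2 * sturmianWeight u b c y) F l r Θ₁ Θ₁')
    (h₂ : IsSturmDirichletSolution (sturmianWeight u b c)
      (fun y => (α y : ℂ) ^ 2 * sturmianWeight u b c y) F l r Θ₂ Θ₂') :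
    EqOn Θ₁ Θ₂ (Icc l r) := by
  have hpos := fun y hy => re_mul_sturmianWeight_pos hc (hub y hy)
  refine h₁.eqOn h₂ hpos fun y hy => ?_
  rw [mul_left_comm, ← Complex.ofReal_pow]
  exact (mul_nonneg (sq_nonneg _) (hpos y hy).le).trans_eq (Complex.re_ofReal_mul _ _).symm

/-- Uniqueness for the inhomogeneous Sturmian boundary value problem
`∂_y(ℋ ∂_yΘ) − α²ℋΘ = F`, `Θ(±1) = 0`, with `ℋ(y) = (u+b−c)(u−b−c)` and nonreal
spectral parameter `c`, under the Stern stability condition `|u| ≤ |b|`. -/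
theorem inhomogeneous_sturmian_unique (u b : ℝ → ℝ)
    (hu : ContinuousOn u (Icc (-1:ℝ) 1)) (hb : ContinuousOn b (Icc (-1:ℝ) 1))
    (hss : ∀ y ∈ Icc (-1:ℝ) 1, |u y| ≤ |b y|)
    (α : ℝ) (c : ℂ) (hc : c.im ≠ 0)
    (F : ℝ → ℂ) (Θ₁ Θ₂ : ℝ → ℂ)
    (hΘ₁diff : ∀ y ∈ Icc (-1:ℝ) 1, DifferentiableAt ℝ Θ₁ y)
    (hΘ₁'cont : ContinuousOn (deriv Θ₁) (Icc (-1:ℝ) 1))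
    (hΘ₂diff : ∀ y ∈ Icc (-1:ℝ) 1, DifferentiableAt ℝ Θ₂ y)
    (hΘ₂'cont : ContinuousOn (deriv Θ₂) (Icc (-1:ℝ) 1))
    (hode₁ : ∀ y ∈ Icc (-1:ℝ) 1,
      HasDerivAt
        (fun z => (((u z + b z : ℝ) : ℂ) - c) * (((u z - b z : ℝ) : ℂ) - c) * deriv Θ₁ z)
        ((α : ℂ) ^ 2 * ((((u y + b y : ℝ) : ℂ) - c) * (((u y - b y : ℝ) : ℂ) - c)) * Θ₁ y
          + F y) y)
    (hode₂ : ∀ y ∈ Icc (-1:ℝ) 1,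
      HasDerivAt
        (fun z => (((u z + b z : ℝ) : ℂ) - c) * (((u z - b z : ℝ) : ℂ) - c) * deriv Θ₂ z)
        ((α : ℂ) ^ 2 * ((((u y + b y : ℝ) : ℂ) - c) * (((u y - b y : ℝ) : ℂ) - c)) * Θ₂ y
          + F y) y)
    (hbc₁ : Θ₁ (-1) = 0 ∧ Θ₁ 1 = 0) (hbc₂ : Θ₂ (-1) = 0 ∧ Θ₂ 1 = 0) :
    ∀ y ∈ Icc (-1:ℝ) 1, Θ₁ y = Θ₂ y := by
  have hcnorm : 0 < ‖c‖ ^ 2 := pow_pos ((abs_pos.2 hc).trans_le c.abs_im_le_norm) 2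
  exact inhomogeneous_sturmian_unique_general (α := fun _ => α) hc
    (fun y hy => lt_add_of_pos_of_le hcnorm (sq_le_sq.2 (hss y (Ioo_subset_Icc_self hy))))
    (.of_hasDerivAt_Icc (fun y hy => (hΘ₁diff y hy).hasDerivAt) hode₁ hbc₁.1 hbc₁.2)
    (.of_hasDerivAt_Icc (fun y hy => (hΘ₂diff y hy).hasDerivAt) hode₂ hbc₂.1 hbc₂.2)
end
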